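/- arXiv:math/0406114 — 3 statements merged into one kernel-verified Lean document; each statement's English description precedes it below -/
import Mathlib

section
/- Bowen's formula: Let (Λ,f) be a C¹ conformal repeller. Then the Hausdorff dimension of Λ coincides with its lower and upper box dimensions, and the common value is the unique zero s_crit of the pressure function: dimH Λ = dim̲_B Λ = dim̄_B Λ = s_crit, where P(s_crit,Λ,f)=0, P(s,Λ,f)>0 for 0≤s<s_crit and P(s,Λ,f)<0 for s>s_crit. -/
open Filter Topology Metric Set MeasureTheory
open scoped Classical ENNReal

noncomputable section

/-- `Df` is the conformal derivative of `f`: the double limit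
`Df x = lim_{u ≠ v → x} d(f u, f v)/d(u,v)` exists at every point. -/
def IsConfDeriv {Λ : Type*} [MetricSpace Λ] (f : Λ → Λ) (Df : Λ → ℝ) : Prop :=
  ∀ x : Λ, Filter.Tendsto (fun p : Λ × Λ => dist (f p.1) (f p.2) / dist p.1 p.2)
    ((𝓝 x ×ˢ 𝓝 x) ⊓ 𝓟 {p : Λ × Λ | p.1 ≠ p.2}) (𝓝 (Df x))

/-- `Df^{(n)}_x = Df_{f^{n-1}x} ⋯ Df_x`, the conformal derivative along the orbit. -/
def orbDeriv {Λ : Type*} [MetricSpace Λ] (f : Λ → Λ) (Df : Λ → ℝ) (n : ℕ) (x : Λ) : ℝ :=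
  ∏ k ∈ Finset.range n, Df (f^[k] x)

/-- (C2): uniform expansion, `Df^{(n)}_x ≥ C βⁿ` for some `C > 0`, `β > 1`. -/
def UnifExpanding {Λ : Type*} [MetricSpace Λ] (f : Λ → Λ) (Df : Λ → ℝ) : Prop :=
  ∃ C : ℝ, 0 < C ∧ ∃ β : ℝ, 1 < β ∧ ∀ (x : Λ) (n : ℕ), C * β ^ n ≤ orbDeriv f Df n x

/-- dynamical pressure `P(s,Λ,f) = liminf_n (1/n) log sup_y Σ_{f^n x = y} (Df^{(n)}_x)^{-s}`. -/
def pressure {Λ : Type*} [MetricSpace Λ] (f : Λ → Λ) (Df : Λ → ℝ) (s : ℝ) : ℝ :=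
  Filter.liminf (fun n : ℕ =>
    (n : ℝ)⁻¹ * Real.log (⨆ y : Λ, ∑' x : ↥(f^[n] ⁻¹' {y}), orbDeriv f Df n (x : Λ) ^ (-s)))
    Filter.atTop

/-- `N(δ)`: the minimal number of open balls of radius `δ` needed to cover the space. -/
def coverNum (Λ : Type*) [MetricSpace Λ] (δ : ℝ) : ℕ :=
  sInf {n : ℕ | ∃ t : Finset Λ, t.card = n ∧ ∀ x : Λ, ∃ c ∈ t, dist x c < δ}

/-- upper box dimension `limsup_{δ→0⁺} log N(δ) / (-log δ)`. -/
def upperBoxDim (Λ : Type*) [MetricSpace Λ] : ℝ≥0∞ :=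
  Filter.limsup (fun δ : ℝ => ENNReal.ofReal (Real.log (coverNum Λ δ) / (-Real.log δ))) (𝓝[>] 0)

/-- lower box dimension `liminf_{δ→0⁺} log N(δ) / (-log δ)`. -/
def lowerBoxDim (Λ : Type*) [MetricSpace Λ] : ℝ≥0∞ :=
  Filter.liminf (fun δ : ℝ => ENNReal.ofReal (Real.log (coverNum Λ δ) / (-Real.log δ))) (𝓝[>] 0)

section helpers

variable {Λ : Type*} [MetricSpace Λ]

lemma orbDeriv_succ (f : Λ → Λ) (Df : Λ → ℝ) (n : ℕ) (x : Λ) :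
    orbDeriv f Df (n+1) x = Df x * orbDeriv f Df n (f x) := by
  simp [orbDeriv, Finset.prod_range_succ', mul_comm, Function.iterate_succ_apply]

lemma orbDeriv_add (f : Λ → Λ) (Df : Λ → ℝ) (n m : ℕ) (x : Λ) :
    orbDeriv f Df (n+m) x = orbDeriv f Df n x * orbDeriv f Df m (f^[n] x) := by
  simp only [orbDeriv, Finset.prod_range_add]
  congr 1
  apply Finset.prod_congr rfl
  intro k _
  rw [← Function.iterate_add_apply, add_comm]

lemma neBot_aux (x : Λ) (h : (𝓝[≠] x).NeBot) :
    ((𝓝 x ×ˢ 𝓝 x) ⊓ 𝓟 {p : Λ × Λ | p.1 ≠ p.2}).NeBot := by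
  have h1 : Tendsto (fun u : Λ => (u, x)) (𝓝[≠] x)
      ((𝓝 x ×ˢ 𝓝 x) ⊓ 𝓟 {p : Λ × Λ | p.1 ≠ p.2}) := by
    apply tendsto_inf.2
    constructor
    · apply Tendsto.prodMk
      · exact tendsto_id.mono_left nhdsWithin_le_nhds
      · exact tendsto_const_nhds
    · apply tendsto_principal.2
      filter_upwards [self_mem_nhdsWithin] with u hu using hu
  exact h1.neBot

lemma local_conf {f : Λ → Λ} {Df : Λ → ℝ} (hpt : ∀ x : Λ, (𝓝[≠] x).NeBot)
    (hconf : IsConfDeriv f Df) (x : Λ) {ε : ℝ} (hε : 0 < ε) :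
    ∃ R > 0, (∀ u ∈ ball x R, ∀ v ∈ ball x R, u ≠ v →
      |dist (f u) (f v) / dist u v - Df x| ≤ ε) ∧ ∀ z ∈ ball x R, |Df z - Df x| ≤ ε := by
  have h := hconf x
  have h2 := h (Metric.closedBall_mem_nhds (Df x) hε)
  rw [Filter.mem_map, Filter.mem_inf_principal, nhds_prod_eq.symm, Metric.mem_nhds_iff] at h2
  obtain ⟨R, hR, h3⟩ := h2
  have h4 : ∀ u ∈ ball x R, ∀ v ∈ ball x R, u ≠ v →
      |dist (f u) (f v) / dist u v - Df x| ≤ ε := by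
    intro u hu v hv huv
    have : (u, v) ∈ ball (x, x) R := by
      rw [← ball_prod_same]; exact ⟨hu, hv⟩
    have := h3 this huv
    simpa [Real.dist_eq] using this
  refine ⟨R, hR, h4, ?_⟩
  intro z hz
  have hn := neBot_aux z (hpt z)
  have ht := hconf z
  have hev : ∀ᶠ p : Λ × Λ in ((𝓝 z ×ˢ 𝓝 z) ⊓ 𝓟 {p : Λ × Λ | p.1 ≠ p.2}),
      |dist (f p.1) (f p.2) / dist p.1 p.2 - Df x| ≤ ε := by
    rw [Filter.eventually_inf_principal]
    have hb : ball x R ∈ 𝓝 z := isOpen_ball.mem_nhds hz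
    filter_upwards [Filter.prod_mem_prod hb hb] with p hp hne
    exact h4 _ hp.1 _ hp.2 hne
  exact le_of_tendsto ((ht.sub_const _).abs) hev

lemma Df_continuous {f : Λ → Λ} {Df : Λ → ℝ} (hpt : ∀ x : Λ, (𝓝[≠] x).NeBot)
    (hconf : IsConfDeriv f Df) : Continuous Df := by
  rw [continuous_iff_continuousAt]
  intro x
  rw [ContinuousAt, Metric.tendsto_nhds]
  intro ε hε
  obtain ⟨R, hR, -, h⟩ := local_conf hpt hconf x (half_pos hε)
  filter_upwards [ball_mem_nhds x hR] with z hz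
  rw [Real.dist_eq]
  linarith [h z hz]

lemma exists_m [CompactSpace Λ] [Nonempty Λ] {f : Λ → Λ} {Df : Λ → ℝ}
    (hpt : ∀ x : Λ, (𝓝[≠] x).NeBot)
    (hconf : IsConfDeriv f Df) (hpos : ∀ x, 0 < Df x) :
    ∃ m M : ℝ, 0 < m ∧ ∀ x, m ≤ Df x ∧ Df x ≤ M := by
  have hc := Df_continuous hpt hconf
  obtain ⟨a, -, ha⟩ := isCompact_univ.exists_isMinOn (univ_nonempty (α := Λ)) hc.continuousOn
  obtain ⟨b, -, hb⟩ := isCompact_univ.exists_isMaxOn (univ_nonempty (α := Λ)) hc.continuousOn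
  exact ⟨Df a, Df b, hpos a, fun x => ⟨ha (mem_univ x), hb (mem_univ x)⟩⟩

/-- uniform distortion on small balls -/
lemma distort [CompactSpace Λ] [Nonempty Λ] {f : Λ → Λ} {Df : Λ → ℝ}
    (hpt : ∀ x : Λ, (𝓝[≠] x).NeBot)
    (hconf : IsConfDeriv f Df) (hpos : ∀ x, 0 < Df x) {θ : ℝ} (hθ : 1 < θ) :
    ∃ ρ > 0, ∀ c a b, dist a c < ρ → dist b c < ρ →
      Df c * dist a b ≤ θ * dist (f a) (f b) ∧ dist (f a) (f b) ≤ θ * Df c * dist a b ∧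
      Df c ≤ θ * Df a := by
  obtain ⟨m, M, hm, hmM⟩ := exists_m hpt hconf hpos
  have hθ0 : 0 < θ := by linarith
  set ε : ℝ := m * (1 - θ⁻¹) / 2 with hεd
  have hti : θ⁻¹ < 1 := inv_lt_one_of_one_lt₀ hθ
  have hε : 0 < ε := by
    have : 0 < 1 - θ⁻¹ := by linarith
    positivity
  choose R hR h1 h2 using fun x => local_conf hpt hconf x hε
  obtain ⟨ρ, hρ, hL⟩ := lebesgue_number_lemma_of_metric (s := (univ : Set Λ)) isCompact_univ
    (c := fun x : Λ => ball x (R x)) (fun _ => isOpen_ball)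
    (fun x _ => mem_iUnion.2 ⟨x, mem_ball_self (hR x)⟩)
  refine ⟨ρ, hρ, ?_⟩
  intro c a b ha hb
  obtain ⟨x, hx⟩ := hL c (mem_univ c)
  have hc' : c ∈ ball x (R x) := hx (mem_ball_self hρ)
  have ha' : a ∈ ball x (R x) := hx ha
  have hb' : b ∈ ball x (R x) := hx hb
  have e1 := abs_le.1 (h2 x c hc')
  have e2 := abs_le.1 (h2 x a ha')
  have key : 2 * ε ≤ Df c * (1 - θ⁻¹) := by
    have : m * (1 - θ⁻¹) ≤ Df c * (1 - θ⁻¹) :=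
      mul_le_mul_of_nonneg_right (hmM c).1 (by linarith)
    rw [hεd]; linarith
  have hlow : ∀ q, Df c - 2 * ε ≤ q → Df c ≤ θ * q := by
    intro q hq
    have h3 : Df c * θ⁻¹ ≤ q := by linarith
    calc Df c = θ * (Df c * θ⁻¹) := by field_simp
      _ ≤ θ * q := by gcongr
  have hup : ∀ q, q ≤ Df c + 2 * ε → q ≤ θ * Df c := by
    intro q hq
    have h5 : 1 - θ⁻¹ ≤ θ - 1 := by
      have : θ - 1 - (1 - θ⁻¹) = (θ - 1)^2 * θ⁻¹ := by field_simp
      have h6 : 0 ≤ (θ - 1)^2 * θ⁻¹ := by positivity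
      linarith
    have : Df c * (1 - θ⁻¹) ≤ Df c * (θ - 1) :=
      mul_le_mul_of_nonneg_left h5 (hpos c).le
    linarith
  refine ⟨?_, ?_, hlow _ (by linarith [e1.1, e2.1, e1.2, e2.2])⟩
  · by_cases hab : a = b
    · simp [hab]
    have hd : 0 < dist a b := dist_pos.2 hab
    have e3 := abs_le.1 (h1 x a ha' b hb' hab)
    have := hlow (dist (f a) (f b) / dist a b) (by linarith [e1.1, e1.2, e3.1, e3.2])
    calc Df c * dist a b ≤ θ * (dist (f a) (f b) / dist a b) * dist a b := by gcongr
      _ = _ := by field_simp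
  · by_cases hab : a = b
    · simp [hab]
    have hd : 0 < dist a b := dist_pos.2 hab
    have e3 := abs_le.1 (h1 x a ha' b hb' hab)
    have := hup (dist (f a) (f b) / dist a b) (by linarith [e1.1, e1.2, e3.1, e3.2])
    rwa [div_le_iff₀ hd] at this

/-- uniform openness -/
lemma unif_open [CompactSpace Λ] {f : Λ → Λ} (hcont : Continuous f) (hopen : IsOpenMap f)
    {ρ : ℝ} (hρ : 0 < ρ) :
    ∃ η > 0, ∀ x y, dist (f x) y < η → ∃ x', f x' = y ∧ dist x x' < ρ := by
  have h1 : ∀ x : Λ, ∃ e > 0, ball (f x) e ⊆ f '' ball x (ρ/2) := fun x =>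
    Metric.isOpen_iff.1 (hopen _ isOpen_ball) (f x) ⟨x, mem_ball_self (half_pos hρ), rfl⟩
  choose e he h1 using h1
  have hop : ∀ x : Λ, IsOpen (ball x (ρ/2) ∩ f ⁻¹' ball (f x) (e x / 2)) := fun x =>
    isOpen_ball.inter (isOpen_ball.preimage hcont)
  obtain ⟨t, ht⟩ := isCompact_univ.elim_finite_subcover _ hop (fun x _ => mem_iUnion.2
    ⟨x, mem_ball_self (half_pos hρ), mem_ball_self (half_pos (he x))⟩)
  have : ∃ η > 0, ∀ x ∈ t, η ≤ e x / 2 := by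
    clear ht
    induction t using Finset.induction_on with
    | empty => exact ⟨1, one_pos, by simp⟩
    | insert a t _ ih =>
      obtain ⟨η, hη, h⟩ := ih
      refine ⟨min η (e a / 2), lt_min hη (half_pos (he a)), ?_⟩
      intro x hx
      rcases Finset.mem_insert.1 hx with rfl | hx
      · exact min_le_right _ _
      · exact (min_le_left _ _).trans (h x hx)
  obtain ⟨η, hη, h⟩ := this
  refine ⟨η, hη, fun x y hxy => ?_⟩
  obtain ⟨z, hz, hxz⟩ := mem_iUnion₂.1 (ht (mem_univ x))
  have hy : y ∈ ball (f z) (e z) := by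
    have h2 : dist (f x) (f z) < e z / 2 := hxz.2
    have := dist_triangle y (f x) (f z)
    rw [dist_comm y (f x)] at this
    have := h z hz
    rw [mem_ball]; linarith
  obtain ⟨x', hx', rfl⟩ := h1 z hy
  refine ⟨x', rfl, ?_⟩
  have h3 : dist x z < ρ / 2 := hxz.1
  have h4 : dist x' z < ρ / 2 := hx'
  linarith [dist_triangle_right x x' z]

lemma exp_low {f : Λ → Λ} {Df : Λ → ℝ} (hpos : ∀ x, 0 < Df x) {θ ρ : ℝ} (hθ : 1 < θ)
    (hd : ∀ c a b, dist a c < ρ → dist b c < ρ → Df c * dist a b ≤ θ * dist (f a) (f b))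
    (n : ℕ) : ∀ (c u v : Λ), (∀ k < n, dist (f^[k] u) (f^[k] c) < ρ) →
      (∀ k < n, dist (f^[k] v) (f^[k] c) < ρ) →
      orbDeriv f Df n c * dist u v ≤ θ ^ n * dist (f^[n] u) (f^[n] v) := by
  induction n with
  | zero => intro c u v _ _; simp [orbDeriv]
  | succ n ih =>
    intro c u v hu hv
    have h1 := ih (f c) (f u) (f v) (fun k hk => by simpa using hu (k+1) (by omega))
      (fun k hk => by simpa using hv (k+1) (by omega))
    have h2 := hd c u v (by simpa using hu 0 (by omega)) (by simpa using hv 0 (by omega))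
    have hp : 0 ≤ orbDeriv f Df n (f c) := Finset.prod_nonneg fun k _ => (hpos _).le
    rw [orbDeriv_succ, Function.iterate_succ_apply, Function.iterate_succ_apply]
    calc Df c * orbDeriv f Df n (f c) * dist u v
        = orbDeriv f Df n (f c) * (Df c * dist u v) := by ring
      _ ≤ orbDeriv f Df n (f c) * (θ * dist (f u) (f v)) := by gcongr
      _ = θ * (orbDeriv f Df n (f c) * dist (f u) (f v)) := by ring
      _ ≤ θ * (θ ^ n * dist (f^[n] (f u)) (f^[n] (f v))) := by gcongr
      _ = _ := by ring

lemma lift_lemma [CompactSpace Λ] {f : Λ → Λ} {Df : Λ → ℝ} (hcont : Continuous f)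
    (hopen : IsOpenMap f) (hpos : ∀ x, 0 < Df x)
    {C β θ ρ : ℝ} (hC : 0 < C) (hC1 : C ≤ 1) (hθ : 1 < θ) (hθβ : θ ≤ β) (hρ : 0 < ρ)
    (hexp : ∀ (x : Λ) (n : ℕ), C * β ^ n ≤ orbDeriv f Df n x)
    (hd : ∀ c a b, dist a c < ρ → dist b c < ρ → Df c * dist a b ≤ θ * dist (f a) (f b)) :
    ∃ r > 0, ∀ (n : ℕ) (x y : Λ), dist (f^[n] x) y < r → ∃ x', f^[n] x' = y ∧
      ∀ k < n, dist (f^[k] x) (f^[k] x') < ρ := by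
  obtain ⟨η, hη, h⟩ := unif_open hcont hopen hρ
  suffices H : ∀ (n : ℕ) (x y : Λ), dist (f^[n] x) y < C * η → ∃ x', f^[n] x' = y ∧
      (∀ k < n, dist (f^[k] x) (f^[k] x') < ρ) ∧ dist x x' < η by
    refine ⟨C * η, by positivity, fun n x y hxy => ?_⟩
    obtain ⟨x', h1, h2, -⟩ := H n x y hxy
    exact ⟨x', h1, h2⟩
  intro n
  induction n with
  | zero =>
    intro x y hxy
    refine ⟨y, rfl, by simp, ?_⟩
    have : C * η ≤ 1 * η := by gcongr
    simp at hxy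
    linarith
  | succ n ih =>
    intro x y hxy
    obtain ⟨z, hz, hz1, hz2⟩ := ih (f x) y hxy
    obtain ⟨x', hx', hxx⟩ := h x z hz2
    have hsh : ∀ k < n + 1, dist (f^[k] x) (f^[k] x') < ρ := by
      intro k hk
      cases k with
      | zero => simpa using hxx
      | succ k => simpa [hx'] using hz1 k (by omega)
    have hfx : f^[n+1] x' = y := by simp [hx', hz]
    refine ⟨x', hfx, hsh, ?_⟩
    have h1 := exp_low hpos hθ hd (n+1) x' x x' hsh (by simp [hρ])
    rw [hfx] at h1
    have h2 := hexp x' (n+1)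
    have hθ0 : 0 < θ := by linarith
    have hβ : 0 < β := by linarith
    have h3 : C * β^(n+1) * dist x x' < C * β^(n+1) * η := by
      calc C * β^(n+1) * dist x x' ≤ orbDeriv f Df (n+1) x' * dist x x' := by gcongr
        _ ≤ θ^(n+1) * dist (f^[n+1] x) y := h1
        _ < θ^(n+1) * (C * η) := by gcongr
        _ ≤ β^(n+1) * (C * η) := by gcongr
        _ = _ := by ring
    exact lt_of_mul_lt_mul_left h3 (by positivity)

/-- fibre sum -/
def Ssum (f : Λ → Λ) (Df : Λ → ℝ) (s : ℝ) (n : ℕ) (y : Λ) : ℝ :=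
  ∑' x : ↥(f^[n] ⁻¹' {y}), orbDeriv f Df n (x : Λ) ^ (-s)

/-- sup of fibre sums -/
def Zsum (f : Λ → Λ) (Df : Λ → ℝ) (s : ℝ) (n : ℕ) : ℝ := ⨆ y : Λ, Ssum f Df s n y

lemma fib_finite {f : Λ → Λ} (hfib : ∀ y : Λ, (f ⁻¹' {y}).Finite) (n : ℕ) :
    ∀ y, (f^[n] ⁻¹' {y}).Finite := by
  induction n with
  | zero => intro y; simp
  | succ n ih =>
    intro y
    have : f^[n+1] ⁻¹' {y} = ⋃ z ∈ f^[n] ⁻¹' {y}, f ⁻¹' {z} := by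
      ext x; simp
    rw [this]
    exact (ih y).biUnion fun z _ => hfib z

/-- finite fibre -/
def Fib (f : Λ → Λ) (hfib : ∀ y : Λ, (f ⁻¹' {y}).Finite) (n : ℕ) (y : Λ) : Finset Λ :=
  (fib_finite hfib n y).toFinset

lemma mem_Fib {f : Λ → Λ} {hfib : ∀ y : Λ, (f ⁻¹' {y}).Finite} {n : ℕ} {x y : Λ} :
    x ∈ Fib f hfib n y ↔ f^[n] x = y := by simp [Fib]

lemma Ssum_eq {f : Λ → Λ} (hfib : ∀ y : Λ, (f ⁻¹' {y}).Finite) (Df : Λ → ℝ) (s : ℝ) (n : ℕ)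
    (y : Λ) : Ssum f Df s n y = ∑ x ∈ Fib f hfib n y, orbDeriv f Df n x ^ (-s) := by
  have e : ((Fib f hfib n y : Finset Λ) : Set Λ) = f^[n] ⁻¹' {y} := by
    ext x; simp [Fib]
  rw [Ssum, ← Finset.tsum_subtype' (Fib f hfib n y) (fun x => orbDeriv f Df n x ^ (-s)), e]

lemma exists_p [CompactSpace Λ] {f : Λ → Λ} {Df : Λ → ℝ}
    (hfib : ∀ y : Λ, (f ⁻¹' {y}).Finite) (hpos : ∀ x, 0 < Df x) {θ ρ : ℝ} (hρ : 0 < ρ)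
    (hd : ∀ c a b, dist a c < ρ → dist b c < ρ → Df c * dist a b ≤ θ * dist (f a) (f b)) :
    ∃ p : ℕ, 1 ≤ p ∧ ∀ n y, (Fib f hfib n y).card ≤ p ^ n := by
  obtain ⟨t, -, htf, ht⟩ := Metric.totallyBounded_iff.1 (isCompact_univ (X := Λ)).totallyBounded ρ hρ
    |>.imp fun t h => (⟨trivial, h.1, h.2⟩ : True ∧ _ ∧ _)
  have hc : ∀ x : Λ, ∃ c ∈ t, dist x c < ρ := by
    intro x
    simpa using ht (mem_univ x)
  choose c hct hc using hc
  have h1 : ∀ y, (hfib y).toFinset.card ≤ htf.toFinset.card + 1 := by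
    intro y
    refine le_trans (Finset.card_le_card_of_injOn c (fun x _ => by simpa using hct x) ?_)
      (Nat.le_succ _)
    intro a ha b hb hab
    simp at ha hb
    have := hd (c a) a b (hc a) (hab ▸ hc b)
    rw [ha, hb, dist_self, mul_zero] at this
    by_contra hne
    have := mul_pos (hpos (c a)) (dist_pos.2 hne)
    linarith
  refine ⟨htf.toFinset.card + 1, by omega, ?_⟩
  set p := htf.toFinset.card + 1
  intro n
  induction n with
  | zero =>
    intro y
    have : Fib f hfib 0 y = {y} := by ext x; simp [mem_Fib]
    simp [this]
  | succ n ih =>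
    intro y
    have h2 := Finset.card_le_mul_card_image (f := f) (Fib f hfib (n+1) y) p (fun a _ => by
      refine le_trans (Finset.card_le_card ?_) (h1 a)
      intro x hx
      simpa using (Finset.mem_filter.1 hx).2)
    have h3 : ((Fib f hfib (n+1) y).image f).card ≤ p ^ n := by
      refine le_trans (Finset.card_le_card ?_) (ih y)
      intro z hz
      obtain ⟨x, hx, rfl⟩ := Finset.mem_image.1 hz
      rw [mem_Fib] at hx ⊢
      simpa using hx
    calc _ ≤ p * ((Fib f hfib (n+1) y).image f).card := h2
      _ ≤ p * p ^ n := by gcongr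
      _ = p ^ (n+1) := by ring

/-- Standing quantitative data. -/
structure Good (f : Λ → Λ) (Df : Λ → ℝ) (C β M : ℝ) (p : ℕ) : Prop where
  fib : ∀ y : Λ, (f ⁻¹' {y}).Finite
  surj : Function.Surjective f
  pos : ∀ x, 0 < Df x
  C0 : 0 < C
  C1 : C ≤ 1
  β1 : 1 < β
  exp : ∀ (x : Λ) (n : ℕ), C * β ^ n ≤ orbDeriv f Df n x
  M1 : 1 ≤ M
  leM : ∀ x, Df x ≤ M
  p1 : 1 ≤ p
  card : ∀ n y, (Fib f fib n y).card ≤ p ^ n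

variable {f : Λ → Λ} {Df : Λ → ℝ} {C β M : ℝ} {p : ℕ}

lemma Good.orb_pos (g : Good f Df C β M p) (n : ℕ) (x : Λ) : 0 < orbDeriv f Df n x :=
  Finset.prod_pos fun k _ => g.pos _

lemma Good.orb_le (g : Good f Df C β M p) (n : ℕ) (x : Λ) : orbDeriv f Df n x ≤ M ^ n := by
  calc orbDeriv f Df n x ≤ ∏ k ∈ Finset.range n, M :=
        Finset.prod_le_prod (fun k _ => (g.pos _).le) (fun k _ => g.leM _)
    _ = M ^ n := by simp

lemma Good.S_nonneg (g : Good f Df C β M p) (s : ℝ) (n : ℕ) (y : Λ) : 0 ≤ Ssum f Df s n y := by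
  rw [Ssum_eq g.fib]
  exact Finset.sum_nonneg fun x _ => Real.rpow_nonneg (g.orb_pos n x).le _

lemma Good.S_le (g : Good f Df C β M p) {s : ℝ} (hs : 0 ≤ s) (n : ℕ) (y : Λ) :
    Ssum f Df s n y ≤ p ^ n * C ^ (-s) := by
  rw [Ssum_eq g.fib]
  have hC := g.C0
  calc ∑ x ∈ Fib f g.fib n y, orbDeriv f Df n x ^ (-s)
      ≤ ∑ x ∈ Fib f g.fib n y, C ^ (-s) := by
        apply Finset.sum_le_sum
        intro x _
        apply Real.rpow_le_rpow_of_nonpos g.C0 _ (by linarith)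
        calc C = C * 1 := by ring
          _ ≤ C * β ^ n := by
            have := one_le_pow₀ g.β1.le (n := n)
            gcongr
          _ ≤ _ := g.exp x n
    _ = (Fib f g.fib n y).card * C ^ (-s) := by simp
    _ ≤ ((p ^ n : ℕ) : ℝ) * C ^ (-s) := by
        gcongr
        exact g.card n y
    _ = _ := by push_cast; rfl

lemma Good.bdd (g : Good f Df C β M p) {s : ℝ} (hs : 0 ≤ s) (n : ℕ) :
    BddAbove (range (Ssum f Df s n)) :=
  ⟨p ^ n * C ^ (-s), by rintro _ ⟨y, rfl⟩; exact g.S_le hs n y⟩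

lemma Good.S_le_Z (g : Good f Df C β M p) {s : ℝ} (hs : 0 ≤ s) (n : ℕ) (y : Λ) :
    Ssum f Df s n y ≤ Zsum f Df s n := le_ciSup (g.bdd hs n) y

lemma Good.Z_le [Nonempty Λ] (g : Good f Df C β M p) {s : ℝ} (hs : 0 ≤ s) (n : ℕ) :
    Zsum f Df s n ≤ p ^ n * C ^ (-s) := ciSup_le fun y => g.S_le hs n y

lemma Good.le_S (g : Good f Df C β M p) {s : ℝ} (hs : 0 ≤ s) (n : ℕ) (y : Λ) :
    (M ^ n) ^ (-s) ≤ Ssum f Df s n y := by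
  rw [Ssum_eq g.fib]
  obtain ⟨x, hx⟩ := g.surj.iterate n y
  calc (M ^ n) ^ (-s) ≤ orbDeriv f Df n x ^ (-s) :=
        Real.rpow_le_rpow_of_nonpos (g.orb_pos n x) (g.orb_le n x) (by linarith)
    _ ≤ _ := Finset.single_le_sum (f := fun x => orbDeriv f Df n x ^ (-s))
        (fun x _ => Real.rpow_nonneg (g.orb_pos n x).le _) (mem_Fib.2 hx)

lemma Good.le_Z [Nonempty Λ] (g : Good f Df C β M p) {s : ℝ} (hs : 0 ≤ s) (n : ℕ) :
    (M ^ n) ^ (-s) ≤ Zsum f Df s n :=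
  (g.le_S hs n (Classical.arbitrary Λ)).trans (g.S_le_Z hs n _)

lemma Good.Z_pos [Nonempty Λ] (g : Good f Df C β M p) {s : ℝ} (hs : 0 ≤ s) (n : ℕ) :
    0 < Zsum f Df s n := by
  have := g.M1
  exact lt_of_lt_of_le (by positivity) (g.le_Z hs n)

lemma Good.Z_add_le [Nonempty Λ] (g : Good f Df C β M p) {s t : ℝ} (hs : 0 ≤ s) (ht : 0 ≤ t)
    (n : ℕ) : Zsum f Df (s+t) n ≤ Zsum f Df s n * (C * β ^ n) ^ (-t) := by
  apply ciSup_le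
  intro y
  have hC := g.C0
  have hβ := g.β1
  have hb : 0 < C * β ^ n := by positivity
  refine le_trans ?_ (mul_le_mul_of_nonneg_right (g.S_le_Z hs n y) (by positivity))
  rw [Ssum_eq g.fib, Ssum_eq g.fib, Finset.sum_mul]
  apply Finset.sum_le_sum
  intro x _
  have h := g.orb_pos n x
  rw [neg_add, Real.rpow_add h]
  exact mul_le_mul_of_nonneg_left
    (Real.rpow_le_rpow_of_nonpos hb (g.exp x n) (by linarith)) (by positivity)

lemma Good.Z_le_add [Nonempty Λ] (g : Good f Df C β M p) {s t : ℝ} (hs : 0 ≤ s) (ht : 0 ≤ t)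
    (n : ℕ) : Zsum f Df s n * (M ^ n) ^ (-t) ≤ Zsum f Df (s+t) n := by
  have hM := g.M1
  have hb : 0 < (M ^ n) ^ (-t) := by positivity
  rw [← le_div_iff₀ hb]
  apply ciSup_le
  intro y
  rw [le_div_iff₀ hb]
  refine le_trans ?_ (g.S_le_Z (add_nonneg hs ht) n y)
  rw [Ssum_eq g.fib, Ssum_eq g.fib, Finset.sum_mul]
  apply Finset.sum_le_sum
  intro x _
  have h := g.orb_pos n x
  rw [neg_add, Real.rpow_add h]
  exact mul_le_mul_of_nonneg_left
    (Real.rpow_le_rpow_of_nonpos h (g.orb_le n x) (by linarith)) (by positivity)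

/-- the pressure sequence -/
def aseq (f : Λ → Λ) (Df : Λ → ℝ) (s : ℝ) (n : ℕ) : ℝ := (n : ℝ)⁻¹ * Real.log (Zsum f Df s n)

lemma pressure_eq (s : ℝ) : pressure f Df s = liminf (aseq f Df s) atTop := rfl

lemma log_rpow_pow {M t : ℝ} (hM : 0 < M) (n : ℕ) :
    Real.log ((M ^ n) ^ (-t)) = - (n * (t * Real.log M)) := by
  rw [Real.log_rpow (by positivity), Real.log_pow]; ring

lemma Good.aseq_ge [Nonempty Λ] (g : Good f Df C β M p) {s : ℝ} (hs : 0 ≤ s) (n : ℕ) :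
    - (s * Real.log M) ≤ aseq f Df s n := by
  have hM := g.M1
  have hM0 : 0 < M := by linarith
  have h1 := Real.log_le_log (by positivity) (g.le_Z hs n)
  rw [log_rpow_pow hM0] at h1
  have hl : 0 ≤ Real.log M := Real.log_nonneg hM
  rcases Nat.eq_zero_or_pos n with rfl | hn
  · simp [aseq]; positivity
  · have hn' : (0:ℝ) < n := by exact_mod_cast hn
    rw [aseq, inv_mul_eq_div, le_div_iff₀ hn']
    linarith

lemma Good.aseq_le [Nonempty Λ] (g : Good f Df C β M p) {s : ℝ} (hs : 0 ≤ s) (n : ℕ) :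
    aseq f Df s n ≤ Real.log p + s * (- Real.log C) := by
  have hC := g.C0
  have hp : (1:ℝ) ≤ p := by exact_mod_cast g.p1
  have h1 := Real.log_le_log (g.Z_pos hs n) (g.Z_le hs n)
  rw [Real.log_mul (by positivity) (by positivity), Real.log_pow, Real.log_rpow hC] at h1
  have hl : 0 ≤ Real.log p := Real.log_nonneg hp
  have hl2 : 0 ≤ - Real.log C := by linarith [Real.log_nonpos hC.le g.C1]
  rcases Nat.eq_zero_or_pos n with rfl | hn
  · simp only [aseq, Nat.cast_zero, inv_zero, zero_mul]; positivity
  · have hn' : (1:ℝ) ≤ n := by exact_mod_cast hn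
    rw [aseq, inv_mul_eq_div, div_le_iff₀ (by linarith)]
    nlinarith [mul_nonneg hs hl2]

lemma liminf_cmp {u v c : ℕ → ℝ} {c₀ a b : ℝ} (hu : ∀ n, u n ≤ b) 
    (hv : ∀ n, a ≤ v n)
    (hc : Tendsto c atTop (𝓝 c₀)) (h : ∀ᶠ n in atTop, v n ≤ u n + c n) :
    liminf v atTop ≤ liminf u atTop + c₀ := by
  apply le_of_forall_pos_le_add
  intro ε hε
  have h1 : ∀ᶠ n in atTop, liminf v atTop - ε / 2 < v n :=
    eventually_lt_of_lt_liminf (by linarith) (isBoundedUnder_of ⟨a, hv⟩)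
  have h2 : ∀ᶠ n in atTop, c n < c₀ + ε / 2 := hc.eventually_lt_const (by linarith)
  have h3 : liminf v atTop - c₀ - ε ≤ liminf u atTop := by
    apply le_liminf_of_le
    · exact (isBoundedUnder_of ⟨b, hu⟩ : IsBoundedUnder (· ≤ ·) atTop u).isCoboundedUnder_ge
    · filter_upwards [h, h1, h2] with n x1 x2 x3
      linarith
  linarith

lemma Good.P_up [Nonempty Λ] (g : Good f Df C β M p) {s t : ℝ} (hs : 0 ≤ s) (ht : 0 ≤ t) :
    pressure f Df (s+t) ≤ pressure f Df s - t * Real.log β := by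
  have hC := g.C0
  have hβ : 0 < β := by linarith [g.β1]
  have := liminf_cmp (u := aseq f Df s) (v := aseq f Df (s+t)) (c := fun n : ℕ =>
    - (t * Real.log β) + (-(t * Real.log C)) * (n:ℝ)⁻¹)
    (c₀ := - (t * Real.log β) + (-(t * Real.log C)) * 0) (g.aseq_le hs)
    (g.aseq_ge (add_nonneg hs ht))
    (tendsto_const_nhds.add (tendsto_inv_atTop_nhds_zero_nat.const_mul _)) (by
      filter_upwards [eventually_gt_atTop 0] with n hn
      have hn' : (0:ℝ) < n := by exact_mod_cast hn
      have h1 := Real.log_le_log (g.Z_pos (add_nonneg hs ht) n) (g.Z_add_le hs ht n)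
      rw [Real.log_mul (g.Z_pos hs n).ne' (by positivity), Real.log_rpow (by positivity),
        Real.log_mul (by positivity) (by positivity), Real.log_pow] at h1
      rw [aseq, aseq]
      calc (n:ℝ)⁻¹ * Real.log (Zsum f Df (s+t) n) ≤ (n:ℝ)⁻¹ * (Real.log (Zsum f Df s n) +
              -t * (Real.log C + n * Real.log β)) := by gcongr
        _ = _ := by field_simp; ring)
  rw [pressure_eq, pressure_eq]; linarith

lemma Good.P_low [Nonempty Λ] (g : Good f Df C β M p) {s t : ℝ} (hs : 0 ≤ s) (ht : 0 ≤ t) :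
    pressure f Df s ≤ pressure f Df (s+t) + t * Real.log M := by
  have hM : 0 < M := by linarith [g.M1]
  apply liminf_cmp (u := aseq f Df (s+t)) (v := aseq f Df s) (c := fun n : ℕ => t * Real.log M)
    (g.aseq_le (add_nonneg hs ht)) (g.aseq_ge hs)
    tendsto_const_nhds
  filter_upwards [eventually_gt_atTop 0] with n hn
  have hn' : (0:ℝ) < n := by exact_mod_cast hn
  have hz := g.Z_pos hs n
  have h1 := Real.log_le_log (by positivity) (g.Z_le_add hs ht n)
  rw [Real.log_mul hz.ne' (by positivity), log_rpow_pow hM] at h1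
  rw [aseq, aseq]
  calc (n:ℝ)⁻¹ * Real.log (Zsum f Df s n) ≤ (n:ℝ)⁻¹ * (Real.log (Zsum f Df (s+t) n) +
          n * (t * Real.log M)) := by gcongr; linarith
    _ = _ := by field_simp

lemma Good.P_zero [Nonempty Λ] (g : Good f Df C β M p) : 0 ≤ pressure f Df 0 := by
  rw [pressure_eq]
  apply le_liminf_of_le
  · exact (isBoundedUnder_of ⟨_, g.aseq_le le_rfl⟩ :
      IsBoundedUnder (· ≤ ·) atTop (aseq f Df 0)).isCoboundedUnder_ge
  · filter_upwards with n
    simpa using g.aseq_ge le_rfl n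

lemma exists_zero (P : ℝ → ℝ) {a b : ℝ} (ha : 0 < a) (hb : 0 ≤ b) (h0 : 0 ≤ P 0)
    (hup : ∀ s t, 0 ≤ s → 0 ≤ t → P (s+t) ≤ P s - t * a)
    (hlow : ∀ s t, 0 ≤ s → 0 ≤ t → P s ≤ P (s+t) + t * b) :
    ∃ s₀, 0 ≤ s₀ ∧ P s₀ = 0 ∧ (∀ s, 0 ≤ s → s < s₀ → 0 < P s) ∧ ∀ s, s₀ < s → P s < 0 := by
  have key : ∀ x y, 0 ≤ x → x ≤ y → |P x - P y| ≤ b * |x - y| := by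
    intro x y hx hxy
    have h1 := hup x (y - x) hx (by linarith)
    have h2 := hlow x (y - x) hx (by linarith)
    rw [add_sub_cancel] at h1 h2
    have h3 : 0 ≤ (y - x) * a := mul_nonneg (by linarith) ha.le
    rw [abs_of_nonneg (by linarith : 0 ≤ P x - P y), abs_of_nonpos (by linarith)]
    linarith
  have hcont : ContinuousOn P (Ici 0) := by
    have : LipschitzOnWith ⟨b, hb⟩ P (Ici 0) := by
      apply LipschitzOnWith.of_dist_le_mul
      intro x hx y hy
      rw [Real.dist_eq, Real.dist_eq]
      rcases le_total x y with h | h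
      · exact key x y hx h
      · rw [abs_sub_comm, abs_sub_comm x]; exact key y x hy h
    exact this.continuousOn
  set T := P 0 / a with hT
  have hT0 : 0 ≤ T := by positivity
  have hPT : P T ≤ 0 := by
    have := hup 0 T le_rfl hT0
    rw [zero_add, hT, div_mul_cancel₀ _ ha.ne'] at this
    simpa using this
  obtain ⟨s₀, hs₀, hz⟩ := intermediate_value_Icc' hT0 (hcont.mono Icc_subset_Ici_self)
    (⟨hPT, h0⟩ : (0:ℝ) ∈ Icc (P T) (P 0))
  refine ⟨s₀, hs₀.1, hz, ?_, ?_⟩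
  · intro s hs hlt
    have := hup s (s₀ - s) hs (by linarith)
    rw [add_sub_cancel, hz] at this
    have : 0 < (s₀ - s) * a := mul_pos (by linarith) ha
    linarith
  · intro s hlt
    have := hup s₀ (s - s₀) hs₀.1 (by linarith)
    rw [add_sub_cancel, hz] at this
    have : 0 < (s - s₀) * a := mul_pos (by linarith) ha
    linarith

lemma cover_spec [CompactSpace Λ] {δ : ℝ} (hδ : 0 < δ) :
    ∃ t : Finset Λ, t.card = coverNum Λ δ ∧ ∀ x : Λ, ∃ c ∈ t, dist x c < δ := by
  have hne : {n : ℕ | ∃ t : Finset Λ, t.card = n ∧ ∀ x : Λ, ∃ c ∈ t, dist x c < δ}.Nonempty := by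
    obtain ⟨t, htf, ht⟩ :=
      Metric.totallyBounded_iff.1 (isCompact_univ (X := Λ)).totallyBounded δ hδ
    refine ⟨_, htf.toFinset, rfl, fun x => ?_⟩
    simpa using ht (mem_univ x)
  exact Nat.sInf_mem hne

lemma coverNum_le {δ : ℝ} (t : Finset Λ) (ht : ∀ x : Λ, ∃ c ∈ t, dist x c < δ) :
    coverNum Λ δ ≤ t.card := Nat.sInf_le ⟨t, rfl, ht⟩

lemma coverNum_anti [CompactSpace Λ] {δ δ' : ℝ} (hδ : 0 < δ) (h : δ ≤ δ') :
    coverNum Λ δ' ≤ coverNum Λ δ := by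
  obtain ⟨t, h1, h2⟩ := cover_spec (Λ := Λ) hδ
  rw [← h1]
  refine coverNum_le t fun x => ?_
  obtain ⟨c, hc, hx⟩ := h2 x
  exact ⟨c, hc, hx.trans_le h⟩

lemma coverNum_pos [CompactSpace Λ] [Nonempty Λ] {δ : ℝ} (hδ : 0 < δ) :
    0 < coverNum Λ δ := by
  obtain ⟨t, h1, h2⟩ := cover_spec (Λ := Λ) hδ
  rw [← h1]
  obtain ⟨c, hc, -⟩ := h2 (Classical.arbitrary Λ)
  exact Finset.card_pos.2 ⟨c, hc⟩

lemma cover_rec [CompactSpace Λ] (I : Finset Λ) (U : Λ → Set Λ) (l : Λ → ℝ)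
    (F : Λ → Λ) (hl : ∀ i, 0 < l i) (hcov : ∀ x, ∃ i ∈ I, x ∈ U i)
    (hU : ∀ i ∈ I, ∀ u ∈ U i, ∀ v ∈ U i, dist u v ≤ l i / 2 * dist (F u) (F v))
    {δ : ℝ} (hδ : 0 < δ) : coverNum Λ δ ≤ ∑ i ∈ I, coverNum Λ (δ / l i) := by
  choose T hT1 hT2 using fun i => cover_spec (Λ := Λ) (div_pos hδ (hl i))
  have hpick : ∀ i c, ∃ u : Λ, (∃ w ∈ U i, dist (F w) c < δ / l i) →
      u ∈ U i ∧ dist (F u) c < δ / l i := by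
    intro i c
    by_cases h : ∃ w ∈ U i, dist (F w) c < δ / l i
    · obtain ⟨w, h1, h2⟩ := h
      exact ⟨w, fun _ => ⟨h1, h2⟩⟩
    · exact ⟨c, fun h' => absurd h' h⟩
  choose u hu using hpick
  calc coverNum Λ δ ≤ (I.biUnion fun i => (T i).image (u i)).card := by
        apply coverNum_le
        intro x
        obtain ⟨i, hi, hx⟩ := hcov x
        obtain ⟨c, hc, hxc⟩ := hT2 i (F x)
        obtain ⟨h1, h2⟩ := hu i c ⟨x, hx, hxc⟩
        refine ⟨u i c, Finset.mem_biUnion.2 ⟨i, hi, Finset.mem_image_of_mem _ hc⟩, ?_⟩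
        have h3 : dist (F x) (F (u i c)) < δ / l i + δ / l i := by
          linarith [dist_triangle_right (F x) (F (u i c)) c]
        have hli := hl i
        calc dist x (u i c) ≤ l i / 2 * dist (F x) (F (u i c)) := hU i hi x hx _ h1
          _ < l i / 2 * (δ / l i + δ / l i) := by gcongr
          _ = δ := by field_simp; ring
    _ ≤ ∑ i ∈ I, ((T i).image (u i)).card := Finset.card_biUnion_le
    _ ≤ ∑ i ∈ I, coverNum Λ (δ / l i) := by
        apply Finset.sum_le_sum
        intro i _
        rw [← hT1 i]
        exact Finset.card_image_le

lemma cover_growth [CompactSpace Λ] [Nonempty Λ] (I : Finset Λ) (l : Λ → ℝ) {s : ℝ} (hs : 0 ≤ s)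
    (hl : ∀ i, 0 < l i) (hl2 : ∀ i ∈ I, l i ≤ 1/2) (hsum : ∑ i ∈ I, l i ^ s ≤ 1)
    (hrec : ∀ δ > 0, coverNum Λ δ ≤ ∑ i ∈ I, coverNum Λ (δ / l i)) :
    ∃ A > 0, ∀ δ > 0, δ < 1 → (coverNum Λ δ : ℝ) ≤ A * δ ^ (-s) := by
  set R : ℝ := 1 + ∑ i ∈ I, (l i)⁻¹ with hR
  have hR1 : 1 ≤ R := by
    have : 0 ≤ ∑ i ∈ I, (l i)⁻¹ := Finset.sum_nonneg fun i _ => (inv_pos.2 (hl i)).le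
    linarith
  have hRi : ∀ i ∈ I, (l i)⁻¹ ≤ R := by
    intro i hi
    have := Finset.single_le_sum (f := fun i => (l i)⁻¹)
      (fun i _ => (inv_pos.2 (hl i)).le) hi
    linarith
  have hN1 : 0 < (coverNum Λ 1 : ℝ) := by exact_mod_cast coverNum_pos (Λ := Λ) one_pos
  set A : ℝ := coverNum Λ 1 * R ^ s
  have hA : 0 < A := by positivity
  have base : ∀ δ, 1 ≤ δ → δ ≤ R → (coverNum Λ δ : ℝ) ≤ A * δ ^ (-s) := by
    intro δ h1 h2
    have hδ : 0 < δ := by linarith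
    have e1 : (coverNum Λ δ : ℝ) ≤ coverNum Λ 1 := by exact_mod_cast coverNum_anti one_pos h1
    have e2 : 1 ≤ R ^ s * δ ^ (-s) := by
      rw [Real.rpow_neg hδ.le, ← div_eq_mul_inv, one_le_div (by positivity)]
      exact Real.rpow_le_rpow hδ.le h2 hs
    calc (coverNum Λ δ : ℝ) ≤ coverNum Λ 1 * 1 := by linarith
      _ ≤ coverNum Λ 1 * (R ^ s * δ ^ (-s)) := by gcongr
      _ = A * δ ^ (-s) := by ring
  have main : ∀ m : ℕ, ∀ δ, 0 < δ → (1/2 : ℝ) ^ m ≤ δ → δ ≤ R →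
      (coverNum Λ δ : ℝ) ≤ A * δ ^ (-s) := by
    intro m
    induction m with
    | zero => intro δ _ h1 h2; exact base δ (by simpa using h1) h2
    | succ m ih =>
      intro δ hδ h1 h2
      by_cases h3 : 1 ≤ δ
      · exact base δ h3 h2
      push Not at h3
      calc (coverNum Λ δ : ℝ) ≤ ∑ i ∈ I, (coverNum Λ (δ / l i) : ℝ) := by
            exact_mod_cast hrec δ hδ
        _ ≤ ∑ i ∈ I, A * δ ^ (-s) * l i ^ s := by
            apply Finset.sum_le_sum
            intro i hi
            have hli := hl i
            have hle := hl2 i hi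
            have := ih (δ / l i) (by positivity) (by
              rw [le_div_iff₀ hli]
              calc (1/2:ℝ)^m * l i ≤ (1/2:ℝ)^m * (1/2) := by gcongr
                _ = (1/2:ℝ)^(m+1) := by ring
                _ ≤ δ := h1) (by
              rw [div_eq_mul_inv]
              calc δ * (l i)⁻¹ ≤ 1 * R := by
                    gcongr
                    exact hRi i hi
                _ = R := one_mul R)
            refine this.trans (le_of_eq ?_)
            rw [Real.div_rpow hδ.le hli.le, Real.rpow_neg hli.le]
            field_simp
        _ = A * δ ^ (-s) * ∑ i ∈ I, l i ^ s := by rw [Finset.mul_sum]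
        _ ≤ A * δ ^ (-s) * 1 := by gcongr
        _ = _ := mul_one _
  refine ⟨A, hA, fun δ hδ h1 => ?_⟩
  obtain ⟨m, hm⟩ := exists_pow_lt_of_lt_one hδ (by norm_num : (1/2:ℝ) < 1)
  exact main m δ hδ hm.le (by linarith)

lemma ubox_le [CompactSpace Λ] [Nonempty Λ] {s s' A : ℝ} (hs' : s < s') (hA : 0 < A)
    (h : ∀ δ > 0, δ < 1 → (coverNum Λ δ : ℝ) ≤ A * δ ^ (-s)) :
    upperBoxDim Λ ≤ ENNReal.ofReal s' := by
  apply limsup_le_of_le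
  · isBoundedDefault
  have hlog : Tendsto (fun δ : ℝ => -Real.log δ) (𝓝[>] 0) atTop :=
    tendsto_neg_atBot_atTop.comp Real.tendsto_log_nhdsGT_zero
  have h1 : ∀ᶠ δ : ℝ in 𝓝[>] 0, δ < 1 := by
    filter_upwards [Ioo_mem_nhdsGT (zero_lt_one (α := ℝ))] with δ hδ using hδ.2
  filter_upwards [hlog.eventually_ge_atTop (Real.log A / (s' - s)), hlog.eventually_gt_atTop 0, h1,
    self_mem_nhdsWithin] with δ e1 e2 e3 e4
  have e4 : 0 < δ := e4
  apply ENNReal.ofReal_le_ofReal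
  rw [div_le_iff₀ e2]
  have hN : 0 < (coverNum Λ δ : ℝ) := by exact_mod_cast coverNum_pos (Λ := Λ) e4
  have := Real.log_le_log hN (h δ e4 e3)
  rw [Real.log_mul hA.ne' (by positivity), Real.log_rpow e4] at this
  rw [div_le_iff₀ (by linarith)] at e1
  linarith

lemma dimH_le_lbox [CompactSpace Λ] [Nonempty Λ] :
    dimH (univ : Set Λ) ≤ lowerBoxDim Λ := by
  borelize Λ
  apply le_of_forall_gt
  intro d hd
  obtain ⟨a, ha1, ha2⟩ := ENNReal.lt_iff_exists_nnreal_btwn.1 hd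
  refine lt_of_le_of_lt ?_ ha2
  have hfr : ∃ᶠ δ : ℝ in 𝓝[>] 0,
      ENNReal.ofReal (Real.log (coverNum Λ δ) / (-Real.log δ)) < a :=
    frequently_lt_of_liminf_lt (by isBoundedDefault) ha1
  have hfr2 : ∃ᶠ δ : ℝ in 𝓝[>] 0, (coverNum Λ δ : ℝ) ≤ δ ^ (-(a:ℝ)) ∧ 0 < δ := by
    have h1 : ∀ᶠ δ : ℝ in 𝓝[>] 0, δ < 1 ∧ 0 < δ := by
      filter_upwards [Ioo_mem_nhdsGT (zero_lt_one (α := ℝ))] with δ hδ using ⟨hδ.2, hδ.1⟩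
    refine (hfr.and_eventually h1).mono ?_
    rintro δ ⟨e1, e2, e3⟩
    refine ⟨?_, e3⟩
    have hlog : 0 < - Real.log δ := by linarith [Real.log_neg e3 e2]
    have hN : 0 < (coverNum Λ δ : ℝ) := by exact_mod_cast coverNum_pos (Λ := Λ) e3
    rw [← ENNReal.ofReal_coe_nnreal, ENNReal.ofReal_lt_ofReal_iff'] at e1
    have e4 := e1.1
    rw [div_lt_iff₀ hlog] at e4
    rw [← Real.log_le_log_iff hN (by positivity), Real.log_rpow e3]
    linarith
  obtain ⟨δ, hδ, hδ2⟩ := exists_seq_forall_of_frequently hfr2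
  have hδ0 : Tendsto δ atTop (𝓝 0) := hδ.mono_right nhdsWithin_le_nhds
  choose T hT1 hT2 using fun n => cover_spec (Λ := Λ) (hδ2 n).2
  apply dimH_le_of_hausdorffMeasure_ne_top
  have hdb : ∀ n (c : Λ), Metric.ediam (ball c (δ n)) ≤ ENNReal.ofReal (2 * δ n) := by
    intro n c
    apply Metric.ediam_le
    intro x hx y hy
    rw [edist_dist]
    apply ENNReal.ofReal_le_ofReal
    rw [mem_ball] at hx hy
    linarith [dist_triangle_right x y c]
  have key := Measure.hausdorffMeasure_le_liminf_sum (β := ℕ) (ι := fun n => T n) (a : ℝ)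
    (univ : Set Λ) (fun n => ENNReal.ofReal (2 * δ n)) (l := atTop)
    (by
      have := ENNReal.tendsto_ofReal (hδ0.const_mul 2)
      simpa using this)
    (fun n c => ball (c : Λ) (δ n))
    (by
      filter_upwards with n c
      exact hdb n c)
    (by
      filter_upwards with n x _
      obtain ⟨c, hc, hx⟩ := hT2 n x
      exact mem_iUnion.2 ⟨⟨c, hc⟩, hx⟩)
  refine ne_top_of_le_ne_top (b := ENNReal.ofReal (2 ^ (a:ℝ))) ENNReal.ofReal_ne_top
    (key.trans (liminf_le_of_le (by isBoundedDefault) ?_))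
  intro b hb
  obtain ⟨n, hn⟩ := hb.exists
  refine hn.trans ?_
  obtain ⟨e1, e2⟩ := hδ2 n
  calc ∑ i : T n, Metric.ediam (ball (i : Λ) (δ n)) ^ (a:ℝ)
      ≤ ∑ i : T n, ENNReal.ofReal ((2 * δ n) ^ (a:ℝ)) := by
        apply Finset.sum_le_sum
        intro i _
        rw [← ENNReal.ofReal_rpow_of_pos (by positivity)]
        exact ENNReal.rpow_le_rpow (hdb n i) a.2
    _ = ENNReal.ofReal ((coverNum Λ (δ n)) * (2 * δ n) ^ (a:ℝ)) := by
        rw [ENNReal.ofReal_mul (by positivity), ← hT1 n]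
        simp
    _ ≤ ENNReal.ofReal (2 ^ (a:ℝ)) := by
        apply ENNReal.ofReal_le_ofReal
        calc (coverNum Λ (δ n)) * (2 * δ n) ^ (a:ℝ)
            ≤ δ n ^ (-(a:ℝ)) * (2 * δ n) ^ (a:ℝ) := by gcongr
          _ = 2 ^ (a:ℝ) := by
            rw [Real.mul_rpow (by norm_num) e2.le, Real.rpow_neg e2.le]
            field_simp

lemma sum_biUnion_le' {ι α : Type*} (T : Finset ι) (F : ι → Finset α) (w : α → ℝ)
    (hw : ∀ x, 0 ≤ w x) : ∑ x ∈ T.biUnion F, w x ≤ ∑ i ∈ T, ∑ x ∈ F i, w x := by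
  induction T using Finset.induction_on with
  | empty => simp
  | insert a T ha ih =>
    rw [Finset.biUnion_insert, Finset.sum_insert ha]
    have h1 := Finset.sum_union_inter (s₁ := F a) (s₂ := T.biUnion F) (f := w)
    have h2 : 0 ≤ ∑ x ∈ F a ∩ T.biUnion F, w x := Finset.sum_nonneg fun x _ => hw x
    linarith

lemma Good.upper [CompactSpace Λ] [Nonempty Λ] (g : Good f Df C β M p) (hcont : Continuous f)
    (hopen : IsOpenMap f)
    (hdist : ∀ θ : ℝ, 1 < θ → ∃ ρ > 0, ∀ c a b, dist a c < ρ → dist b c < ρ →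
      Df c * dist a b ≤ θ * dist (f a) (f b) ∧ dist (f a) (f b) ≤ θ * Df c * dist a b ∧
      Df c ≤ θ * Df a) {s : ℝ} (hs : 0 ≤ s) (hP : pressure f Df s < 0) :
    ∃ A > 0, ∀ δ > 0, δ < 1 → (coverNum Λ δ : ℝ) ≤ A * δ ^ (-s) := by
  set κ : ℝ := - pressure f Df s / 2 with hκ
  have hκ0 : 0 < κ := by rw [hκ]; linarith
  have hβ := g.β1
  have hC := g.C0
  set θ : ℝ := min ((1+β)/2) (Real.exp (κ / (2*(s+1)))) with hθd
  have hθ1 : 1 < θ := lt_min (by linarith) (Real.one_lt_exp_iff.2 (by positivity))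
  have hθ0 : 0 < θ := by linarith
  have hθβ : θ < β := lt_of_le_of_lt (min_le_left _ _) (by linarith)
  have hθs : θ ^ s ≤ Real.exp (κ/2) := by
    calc θ ^ s ≤ (Real.exp (κ / (2*(s+1)))) ^ s :=
          Real.rpow_le_rpow hθ0.le (min_le_right _ _) hs
      _ = Real.exp (κ / (2*(s+1)) * s) := (Real.exp_mul _ _).symm
      _ ≤ Real.exp (κ/2) := by
          apply Real.exp_le_exp.2
          rw [div_mul_eq_mul_div, div_le_div_iff₀ (by positivity) (by norm_num)]
          nlinarith
  obtain ⟨ρ, hρ, hd⟩ := hdist θ hθ1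
  have hd1 := fun c a b h1 h2 => (hd c a b h1 h2).1
  obtain ⟨r, hr, hlift⟩ := lift_lemma hcont hopen g.pos hC g.C1 hθ1 hθβ.le hρ g.exp hd1
  obtain ⟨Y, -, hY⟩ := cover_spec (Λ := Λ) hr
  have hfr : ∃ᶠ n in atTop, aseq f Df s n < -κ := by
    apply frequently_lt_of_liminf_lt
    · exact (isBoundedUnder_of ⟨_, g.aseq_le hs⟩ :
        IsBoundedUnder (· ≤ ·) atTop (aseq f Df s)).isCoboundedUnder_ge
    · rw [← pressure_eq, hκ]; linarith
  have hev1 : ∀ᶠ n : ℕ in atTop, (Y.card * 2 ^ s) * (Real.exp (-(κ/2))) ^ n ≤ 1 := by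
    have := (tendsto_pow_atTop_nhds_zero_of_lt_one (Real.exp_pos (-(κ/2))).le
      (by rw [← Real.exp_zero]; exact Real.exp_lt_exp.2 (by linarith))).const_mul (Y.card * 2 ^ s : ℝ)
    rw [mul_zero] at this
    exact (this.eventually_lt_const one_pos).mono fun _ h => h.le
  have hev2 : ∀ᶠ n : ℕ in atTop, 2 / C * (θ/β) ^ n ≤ 1/2 := by
    have := (tendsto_pow_atTop_nhds_zero_of_lt_one (r := θ/β) (by positivity)
      ((div_lt_one (by linarith)).2 hθβ)).const_mul (2 / C : ℝ)
    rw [mul_zero] at this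
    exact (this.eventually_lt_const (by norm_num)).mono fun _ h => h.le
  obtain ⟨n, hn1, hn2, hn3, hn0⟩ :=
    (hfr.and_eventually (hev1.and (hev2.and (eventually_gt_atTop 0)))).exists
  have hn' : (0:ℝ) < n := by exact_mod_cast hn0
  have hZ : Zsum f Df s n ≤ (Real.exp (-κ)) ^ n := by
    rw [aseq, inv_mul_eq_div, div_lt_iff₀ hn'] at hn1
    rw [← Real.exp_nat_mul, ← Real.log_le_iff_le_exp (g.Z_pos hs n)]
    linarith
  set l : Λ → ℝ := fun x => 2 * θ ^ n / orbDeriv f Df n x with hl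
  have hl0 : ∀ i, 0 < l i := fun i => by
    have := g.orb_pos n i
    simp only [hl]; positivity
  set I : Finset Λ := Y.biUnion fun y => Fib f g.fib n y with hI
  apply cover_growth I l hs hl0
  · intro i _
    have h1 := g.exp i n
    have hb : 0 < β := by linarith
    calc l i ≤ 2 * θ ^ n / (C * β ^ n) := by
          simp only [hl]; gcongr
      _ = 2 / C * (θ/β) ^ n := by rw [div_pow]; field_simp
      _ ≤ 1/2 := hn3
  · have hterm : ∀ x, l x ^ s = 2 ^ s * (θ ^ s) ^ n * orbDeriv f Df n x ^ (-s) := by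
      intro x
      have h := g.orb_pos n x
      simp only [hl]
      rw [Real.div_rpow (by positivity) h.le, Real.mul_rpow (by norm_num) (by positivity),
        Real.rpow_neg h.le, Real.rpow_pow_comm hθ0.le]
      rfl
    calc ∑ i ∈ I, l i ^ s ≤ ∑ y ∈ Y, ∑ i ∈ Fib f g.fib n y, l i ^ s := by
          rw [hI]
          exact sum_biUnion_le' _ _ _ fun x => Real.rpow_nonneg (hl0 x).le _
      _ = ∑ y ∈ Y, 2 ^ s * (θ ^ s) ^ n * Ssum f Df s n y := by
          apply Finset.sum_congr rfl
          intro y _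
          rw [Ssum_eq g.fib, Finset.mul_sum]
          exact Finset.sum_congr rfl fun x _ => hterm x
      _ ≤ ∑ y ∈ Y, 2 ^ s * (Real.exp (κ/2)) ^ n * (Real.exp (-κ)) ^ n := by
          apply Finset.sum_le_sum
          intro y _
          have := (g.S_le_Z hs n y).trans hZ
          have h0 := g.S_nonneg s n y
          gcongr
      _ = (Y.card * 2 ^ s) * (Real.exp (-(κ/2))) ^ n := by
          rw [Finset.sum_const, nsmul_eq_mul, mul_assoc, mul_assoc, ← mul_pow, ← Real.exp_add]
          congr 4; ring
      _ ≤ 1 := hn2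
  · intro δ hδ
    apply cover_rec I (fun i => {x | ∀ k < n, dist (f^[k] x) (f^[k] i) < ρ}) l (f^[n]) hl0 _ _ hδ
    · intro x
      obtain ⟨y, hy, hxy⟩ := hY (f^[n] x)
      obtain ⟨x', h1, h2⟩ := hlift n x y hxy
      exact ⟨x', Finset.mem_biUnion.2 ⟨y, hy, mem_Fib.2 h1⟩, h2⟩
    · intro i _ u hu v hv
      have h1 := exp_low g.pos hθ1 hd1 n i u v hu hv
      have h := g.orb_pos n i
      have : l i / 2 * dist (f^[n] u) (f^[n] v) =
          (θ ^ n * dist (f^[n] u) (f^[n] v)) / orbDeriv f Df n i := by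
        simp only [hl]; field_simp
      rw [this, le_div_iff₀ h]
      linarith

lemma ball_cover [CompactSpace Λ] [Nonempty Λ] [MeasurableSpace Λ] [BorelSpace Λ] {s η : ℝ}
    (hs : 0 < s) (hη : 0 < η) (h0 : Measure.hausdorffMeasure s (univ : Set Λ) = 0) :
    ∃ (T : Finset ℕ) (c : ℕ → Λ) (ρ : ℕ → ℝ), (∀ i, 0 < ρ i) ∧
      (∀ x, ∃ i ∈ T, x ∈ ball (c i) (ρ i)) ∧ ∑ i ∈ T, ρ i ^ s ≤ η := by
  rw [Measure.hausdorffMeasure_apply] at h0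
  have h1 := (iSup₂_eq_bot.1 h0) 1 one_pos
  have h2 : (⨅ (t : ℕ → Set Λ) (_ : univ ⊆ ⋃ n, t n) (_ : ∀ n, Metric.ediam (t n) ≤ 1),
          ∑' n, ⨆ _ : (t n).Nonempty, Metric.ediam (t n) ^ s) < ENNReal.ofReal (η/2) := by
    rw [h1]; simpa using hη
  simp only [iInf_lt_iff] at h2
  obtain ⟨t, hcov, -, ht⟩ := h2
  set e : ℕ → ℝ≥0∞ := fun n => ⨆ _ : (t n).Nonempty, Metric.ediam (t n) ^ s with he
  have hη2 : ENNReal.ofReal (η/2) ≠ 0 := by simpa using hη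
  obtain ⟨ε, hε, hεs⟩ := ENNReal.exists_pos_sum_of_countable hη2 ℕ
  set q : ℕ → ℝ≥0∞ := fun n => e n + ε n with hq
  have hqs : ∑' n, q n ≤ ENNReal.ofReal η := by
    rw [hq, ENNReal.tsum_add]
    calc _ ≤ ENNReal.ofReal (η/2) + ENNReal.ofReal (η/2) := add_le_add ht.le hεs.le
      _ = ENNReal.ofReal η := by rw [← ENNReal.ofReal_add (by linarith) (by linarith)]; simp
  have hqt : ∀ n, q n ≠ ⊤ := fun n =>
    ne_top_of_le_ne_top ENNReal.ofReal_ne_top ((ENNReal.le_tsum n).trans hqs)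
  have het : ∀ n, e n ≠ ⊤ := fun n => ne_top_of_le_ne_top (hqt n) le_self_add
  have heq : ∀ n, e n < q n := fun n =>
    ENNReal.lt_add_right (het n) (by simpa using (hε n).ne')
  have hqp : ∀ n, 0 < (q n).toReal := fun n =>
    ENNReal.toReal_pos (lt_of_le_of_lt (zero_le) (heq n)).ne' (hqt n)
  set ρ : ℕ → ℝ := fun n => (q n).toReal ^ (s⁻¹) with hρ
  have hρs : ∀ n, ρ n ^ s = (q n).toReal := fun n => Real.rpow_inv_rpow (hqp n).le hs.ne'
  have hρ0 : ∀ n, 0 < ρ n := fun n => Real.rpow_pos_of_pos (hqp n) _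
  have hc : ∀ n, ∃ c : Λ, (t n).Nonempty → c ∈ t n := by
    intro n
    by_cases h : (t n).Nonempty
    · obtain ⟨c, hc⟩ := h; exact ⟨c, fun _ => hc⟩
    · exact ⟨Classical.arbitrary Λ, fun h' => absurd h' h⟩
  choose c hc using hc
  have hball : ∀ x : Λ, ∃ n, x ∈ ball (c n) (ρ n) := by
    intro x
    obtain ⟨n, hn⟩ := mem_iUnion.1 (hcov (mem_univ x))
    have hne : (t n).Nonempty := ⟨x, hn⟩
    refine ⟨n, ?_⟩
    have h3 : edist x (c n) ^ s < q n := by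
      refine lt_of_le_of_lt ?_ (heq n)
      simp only [he, hne, iSup_pos]
      exact ENNReal.rpow_le_rpow (Metric.edist_le_ediam_of_mem hn (hc n hne)) hs.le
    rw [edist_dist, ENNReal.ofReal_rpow_of_nonneg dist_nonneg hs.le,
      ENNReal.ofReal_lt_iff_lt_toReal (by positivity) (hqt n), ← hρs n] at h3
    exact (Real.rpow_lt_rpow_iff dist_nonneg (hρ0 n).le hs).1 h3
  obtain ⟨T, hT⟩ := isCompact_univ.elim_finite_subcover (fun n => ball (c n) (ρ n))
    (fun _ => isOpen_ball) (fun x _ => mem_iUnion.2 (hball x))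
  refine ⟨T, c, ρ, hρ0, ?_, ?_⟩
  · intro x
    obtain ⟨i, hi, hx⟩ := mem_iUnion₂.1 (hT (mem_univ x))
    exact ⟨i, hi, hx⟩
  · simp only [hρs]
    rw [← ENNReal.toReal_sum (fun i _ => hqt i)]
    exact ENNReal.toReal_le_of_le_ofReal hη.le ((ENNReal.sum_le_tsum T).trans hqs)

lemma Good.ball_time (g : Good f Df C β M p) {θ ρ₀ s s' : ℝ} (hθ : 1 < θ) (hρ₀ : 0 < ρ₀)
    (hs : 0 < s) (hss : s < s') (hθs : θ ^ (2 * s') = β ^ (s' - s))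
    (hd : ∀ c a b, dist a c < ρ₀ → dist b c < ρ₀ →
      Df c * dist a b ≤ θ * dist (f a) (f b) ∧ dist (f a) (f b) ≤ θ * Df c * dist a b ∧
      Df c ≤ θ * Df a) (x : Λ) {ρ : ℝ} (hρ : 0 < ρ) (hρρ : ρ < ρ₀) :
    ∃ n : ℕ, 1 ≤ n ∧ InjOn (f^[n]) (ball x ρ) ∧ ∀ u ∈ ball x ρ,
      orbDeriv f Df n u ^ (-s') ≤ ((ρ₀ * β / C) ^ (s' - s) * ρ₀ ^ (-s')) * ρ ^ s := by
  have hβ : 0 < β := by linarith [g.β1]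
  have hC := g.C0
  have hθ0 : 0 < θ := by linarith
  have hex : ∃ k : ℕ, ρ₀ ≤ θ ^ k * orbDeriv f Df k x * ρ := by
    obtain ⟨k, hk⟩ := pow_unbounded_of_one_lt (ρ₀ / (C * ρ)) g.β1
    refine ⟨k, ?_⟩
    rw [div_lt_iff₀ (by positivity)] at hk
    have h1 := g.exp x k
    have h2 : 1 ≤ θ ^ k := one_le_pow₀ hθ.le
    calc ρ₀ ≤ 1 * (C * β ^ k) * ρ := by linarith
      _ ≤ _ := by gcongr
  set n := Nat.find hex with hn
  have hn1 : ρ₀ ≤ θ ^ n * orbDeriv f Df n x * ρ := Nat.find_spec hex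
  have hn2 : ∀ k < n, θ ^ k * orbDeriv f Df k x * ρ < ρ₀ := fun k hk =>
    not_le.1 (Nat.find_min hex hk)
  have hnp : 1 ≤ n := by
    rcases Nat.eq_zero_or_pos n with h | h
    · rw [h] at hn1; simp [orbDeriv] at hn1; linarith
    · exact h
  have hsh : ∀ u ∈ ball x ρ, ∀ k ≤ n,
      dist (f^[k] u) (f^[k] x) ≤ θ ^ k * orbDeriv f Df k x * dist u x := by
    intro u hu k
    induction k with
    | zero => intro _; simp [orbDeriv]
    | succ k ih =>
      intro hk
      have h1 := ih (by omega)
      have hop := g.orb_pos k x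
      have h2 : dist (f^[k] u) (f^[k] x) < ρ₀ := by
        refine lt_of_le_of_lt (h1.trans ?_) (hn2 k (by omega))
        have : dist u x ≤ ρ := (mem_ball.1 hu).le
        gcongr
      have h3 := (hd (f^[k] x) (f^[k] u) (f^[k] x) h2 (by simpa using hρ₀)).2.1
      have hp := g.pos (f^[k] x)
      rw [Function.iterate_succ_apply', Function.iterate_succ_apply', orbDeriv,
        Finset.prod_range_succ, ← orbDeriv]
      calc _ ≤ θ * Df (f^[k] x) * dist (f^[k] u) (f^[k] x) := h3
        _ ≤ θ * Df (f^[k] x) * (θ ^ k * orbDeriv f Df k x * dist u x) := by gcongr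
        _ = _ := by ring
  have hsh2 : ∀ u ∈ ball x ρ, ∀ k < n, dist (f^[k] u) (f^[k] x) < ρ₀ := by
    intro u hu k hk
    refine lt_of_le_of_lt ((hsh u hu k hk.le).trans ?_) (hn2 k hk)
    have : dist u x ≤ ρ := (mem_ball.1 hu).le
    have hop := g.orb_pos k x
    gcongr
  refine ⟨n, hnp, ?_, ?_⟩
  · intro u hu v hv huv
    have h1 := exp_low g.pos hθ (fun c a b h1 h2 => (hd c a b h1 h2).1) n x u v
      (hsh2 u hu) (hsh2 v hv)
    rw [huv, dist_self, mul_zero] at h1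
    by_contra hne
    have := mul_pos (g.orb_pos n x) (dist_pos.2 hne)
    linarith
  · intro u hu
    have hdis : orbDeriv f Df n x ≤ θ ^ n * orbDeriv f Df n u := by
      calc orbDeriv f Df n x ≤ ∏ k ∈ Finset.range n, (θ * Df (f^[k] u)) := by
            apply Finset.prod_le_prod (fun k _ => (g.pos _).le)
            intro k hk
            have h2 := hsh2 u hu k (Finset.mem_range.1 hk)
            exact (hd (f^[k] x) (f^[k] u) (f^[k] u) h2 h2).2.2
        _ = _ := by rw [Finset.prod_mul_distrib]; simp [orbDeriv]
    have hup := g.orb_pos n u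
    have h1 : ρ₀ / (θ ^ (2*n) * ρ) ≤ orbDeriv f Df n u := by
      rw [div_le_iff₀ (by positivity)]
      calc ρ₀ ≤ θ ^ n * orbDeriv f Df n x * ρ := hn1
        _ ≤ θ ^ n * (θ ^ n * orbDeriv f Df n u) * ρ := by gcongr
        _ = _ := by rw [two_mul, pow_add]; ring
    have h2 : ρ ≤ ρ₀ * β / C / β ^ n := by
      have h3 := hn2 (n-1) (by omega)
      have h4 := g.exp x (n-1)
      have h5 : 1 ≤ θ ^ (n-1) := one_le_pow₀ hθ.le
      have h6 : C * β ^ (n-1) * ρ < ρ₀ := by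
        calc C * β ^ (n-1) * ρ = 1 * (C * β ^ (n-1)) * ρ := by ring
          _ ≤ θ ^ (n-1) * orbDeriv f Df (n-1) x * ρ := by gcongr
          _ < ρ₀ := h3
      rw [le_div_iff₀ (by positivity), le_div_iff₀ hC]
      have h7 : β ^ n = β ^ (n-1) * β := by
        rw [← pow_succ]; congr 1; omega
      rw [h7]
      nlinarith
    have h3 : ρ ^ (s' - s) ≤ (ρ₀ * β / C) ^ (s' - s) / (β ^ (s' - s)) ^ n := by
      calc ρ ^ (s' - s) ≤ (ρ₀ * β / C / β ^ n) ^ (s' - s) :=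
            Real.rpow_le_rpow hρ.le h2 (by linarith)
        _ = _ := by
            rw [Real.div_rpow (by positivity) (by positivity), Real.rpow_pow_comm hβ.le]
    have h4 : (θ ^ (2*n)) ^ s' = (β ^ (s' - s)) ^ n := by
      rw [← hθs, ← Real.rpow_natCast, ← Real.rpow_natCast, ← Real.rpow_mul hθ0.le,
        ← Real.rpow_mul hθ0.le]
      congr 1; push_cast; ring
    have hB : 0 < (β ^ (s' - s)) ^ n := by positivity
    calc orbDeriv f Df n u ^ (-s') ≤ (ρ₀ / (θ ^ (2*n) * ρ)) ^ (-s') :=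
          Real.rpow_le_rpow_of_nonpos (by positivity) h1 (by linarith)
      _ = (θ ^ (2*n)) ^ s' * ρ ^ s' * ρ₀ ^ (-s') := by
          rw [Real.div_rpow hρ₀.le (by positivity), Real.rpow_neg (by positivity : 0 ≤ θ ^ (2*n) * ρ),
            Real.mul_rpow (by positivity) hρ.le]
          field_simp
      _ = (β ^ (s' - s)) ^ n * (ρ ^ (s' - s) * ρ ^ s) * ρ₀ ^ (-s') := by
          rw [h4, ← Real.rpow_add hρ]; congr 3; ring
      _ ≤ (β ^ (s' - s)) ^ n * ((ρ₀ * β / C) ^ (s' - s) / (β ^ (s' - s)) ^ n * ρ ^ s)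
            * ρ₀ ^ (-s') := by gcongr
      _ = _ := by field_simp

lemma Good.S_rec (g : Good f Df C β M p) {s' : ℝ} (hs' : 0 ≤ s') (T : Finset ℕ)
    (U : ℕ → Set Λ) (n : ℕ → ℕ) (w : ℕ → ℝ) (hw : ∀ i ∈ T, 0 ≤ w i)
    (hcov : ∀ x, ∃ i ∈ T, x ∈ U i) (hinj : ∀ i ∈ T, InjOn (f^[n i]) (U i))
    (hU : ∀ i ∈ T, ∀ u ∈ U i, orbDeriv f Df (n i) u ^ (-s') ≤ w i)
    (N : ℕ) (hN : ∀ i ∈ T, n i ≤ N) (y : Λ) :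
    Ssum f Df s' N y ≤ ∑ i ∈ T, w i * Zsum f Df s' (N - n i) := by
  rw [Ssum_eq g.fib]
  have hnn : ∀ (k : ℕ) x, 0 ≤ orbDeriv f Df k x ^ (-s') := fun k x =>
    Real.rpow_nonneg (g.orb_pos k x).le _
  calc ∑ x ∈ Fib f g.fib N y, orbDeriv f Df N x ^ (-s')
      ≤ ∑ x ∈ T.biUnion (fun i => (Fib f g.fib N y).filter (· ∈ U i)),
          orbDeriv f Df N x ^ (-s') := by
        apply Finset.sum_le_sum_of_subset_of_nonneg
        · intro x hx
          obtain ⟨i, hi, hxi⟩ := hcov x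
          exact Finset.mem_biUnion.2 ⟨i, hi, Finset.mem_filter.2 ⟨hx, hxi⟩⟩
        · intro x _ _; exact hnn N x
    _ ≤ ∑ i ∈ T, ∑ x ∈ (Fib f g.fib N y).filter (· ∈ U i), orbDeriv f Df N x ^ (-s') := by
        exact sum_biUnion_le' _ _ _ (hnn N)
    _ ≤ ∑ i ∈ T, w i * Zsum f Df s' (N - n i) := by
        apply Finset.sum_le_sum
        intro i hi
        have hwi := hw i hi
        have hNi := hN i hi
        refine le_trans ?_ (mul_le_mul_of_nonneg_left (g.S_le_Z hs' (N - n i) y) hwi)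
        rw [Ssum_eq g.fib, Finset.mul_sum]
        calc ∑ x ∈ (Fib f g.fib N y).filter (· ∈ U i), orbDeriv f Df N x ^ (-s')
            ≤ ∑ x ∈ (Fib f g.fib N y).filter (· ∈ U i),
                w i * orbDeriv f Df (N - n i) (f^[n i] x) ^ (-s') := by
              apply Finset.sum_le_sum
              intro x hx
              have hxU := (Finset.mem_filter.1 hx).2
              have e : orbDeriv f Df N x = orbDeriv f Df (n i) x *
                  orbDeriv f Df (N - n i) (f^[n i] x) := by
                rw [← orbDeriv_add]; congr 1; omega
              rw [e, Real.mul_rpow (g.orb_pos _ _).le (g.orb_pos _ _).le]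
              exact mul_le_mul_of_nonneg_right (hU i hi x hxU) (hnn _ _)
          _ = ∑ z ∈ ((Fib f g.fib N y).filter (· ∈ U i)).image (f^[n i]),
                w i * orbDeriv f Df (N - n i) z ^ (-s') := by
              rw [Finset.sum_image]
              intro a ha b hb hab
              exact hinj i hi (Finset.mem_filter.1 ha).2 (Finset.mem_filter.1 hb).2 hab
          _ ≤ _ := by
              apply Finset.sum_le_sum_of_subset_of_nonneg
              · intro z hz
                obtain ⟨x, hx, rfl⟩ := Finset.mem_image.1 hz
                have := mem_Fib.1 (Finset.mem_filter.1 hx).1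
                rw [mem_Fib, ← Function.iterate_add_apply, ← this]
                congr 1; omega
              · intro z _ _; exact mul_nonneg hwi (hnn _ _)

lemma Good.lower [CompactSpace Λ] [Nonempty Λ] (g : Good f Df C β M p)
    (hdist : ∀ θ : ℝ, 1 < θ → ∃ ρ > 0, ∀ c a b, dist a c < ρ → dist b c < ρ →
      Df c * dist a b ≤ θ * dist (f a) (f b) ∧ dist (f a) (f b) ≤ θ * Df c * dist a b ∧
      Df c ≤ θ * Df a) [MeasurableSpace Λ] [BorelSpace Λ] {s s' : ℝ} (hs : 0 < s) (hss : s < s')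
    (h0 : Measure.hausdorffMeasure s (univ : Set Λ) = 0) : pressure f Df s' ≤ 0 := by
  have hβ : 0 < β := by linarith [g.β1]
  have hC := g.C0
  have hs' : 0 < s' := by linarith
  set θ : ℝ := β ^ ((s' - s) / (2 * s')) with hθ
  have hθ1 : 1 < θ := Real.one_lt_rpow g.β1 (div_pos (by linarith) (by linarith))
  have hθs : θ ^ (2 * s') = β ^ (s' - s) := by
    rw [hθ, ← Real.rpow_mul hβ.le]; congr 1; field_simp
  obtain ⟨ρ₀, hρ₀, hd⟩ := hdist θ hθ1
  set K : ℝ := (ρ₀ * β / C) ^ (s' - s) * ρ₀ ^ (-s') with hK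
  have hK0 : 0 < K := by positivity
  set η : ℝ := min K⁻¹ (ρ₀ ^ s / 2) with hη
  have hη0 : 0 < η := lt_min (by positivity) (by positivity)
  obtain ⟨T, c, ρ, hρ, hcov, hsum⟩ := ball_cover hs hη0 h0
  have hρρ : ∀ i ∈ T, ρ i < ρ₀ := by
    intro i hi
    have h1 : ρ i ^ s ≤ η := le_trans (Finset.single_le_sum (f := fun i => ρ i ^ s)
      (fun i _ => Real.rpow_nonneg (hρ i).le _) hi) hsum
    have h2 : η ≤ ρ₀ ^ s / 2 := min_le_right _ _
    have h3 : 0 < ρ₀ ^ s := by positivity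
    exact (Real.rpow_lt_rpow_iff (hρ i).le hρ₀.le hs).1 (by linarith)
  have hex : ∀ i, ∃ n : ℕ, i ∈ T → (1 ≤ n ∧ InjOn (f^[n]) (ball (c i) (ρ i)) ∧
      ∀ u ∈ ball (c i) (ρ i), orbDeriv f Df n u ^ (-s') ≤ K * ρ i ^ s) := by
    intro i
    by_cases hi : i ∈ T
    · obtain ⟨n, hn⟩ := g.ball_time hθ1 hρ₀ hs hss hθs hd (c i) (hρ i) (hρρ i hi)
      exact ⟨n, fun _ => hn⟩
    · exact ⟨0, fun h => absurd h hi⟩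
  choose n hn using hex
  set Nm := T.sup n with hNm
  set B : ℝ := ∑ k ∈ Finset.range (Nm + 1), Zsum f Df s' k with hB
  have hBk : ∀ k ≤ Nm, Zsum f Df s' k ≤ B := fun k hk =>
    Finset.single_le_sum (f := fun k => Zsum f Df s' k) (fun k _ => (g.Z_pos hs'.le k).le)
      (Finset.mem_range.2 (by omega))
  have hB0 : 0 < B := lt_of_lt_of_le (g.Z_pos hs'.le 0) (hBk 0 (by omega))
  have hZ : ∀ N, Zsum f Df s' N ≤ B := by
    intro N
    induction N using Nat.strong_induction_on with
    | _ N ih =>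
      by_cases hN : N ≤ Nm
      · exact hBk N hN
      apply ciSup_le
      intro y
      refine (g.S_rec hs'.le T (fun i => ball (c i) (ρ i)) n (fun i => K * ρ i ^ s)
        (fun i _ => mul_nonneg hK0.le (Real.rpow_nonneg (hρ i).le _)) hcov
        (fun i hi => (hn i hi).2.1) (fun i hi => (hn i hi).2.2) N
        (fun i hi => by have := Finset.le_sup (f := n) hi; omega) y).trans ?_
      calc ∑ i ∈ T, K * ρ i ^ s * Zsum f Df s' (N - n i) ≤ ∑ i ∈ T, K * ρ i ^ s * B := by
            apply Finset.sum_le_sum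
            intro i hi
            have h1 := (hn i hi).1
            exact mul_le_mul_of_nonneg_left (ih _ (by omega))
              (mul_nonneg hK0.le (Real.rpow_nonneg (hρ i).le _))
        _ = K * (∑ i ∈ T, ρ i ^ s) * B := by
            clear_value B
            rw [Finset.mul_sum, Finset.sum_mul]
        _ ≤ K * K⁻¹ * B := by
            have : ∑ i ∈ T, ρ i ^ s ≤ K⁻¹ := hsum.trans (min_le_left _ _)
            gcongr
        _ = B := by field_simp
  have := liminf_cmp (u := fun _ => 0) (v := aseq f Df s') (c := fun n : ℕ =>
    Real.log B * (n:ℝ)⁻¹) (c₀ := Real.log B * 0) (b := 0) (fun _ => le_rfl)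
    (g.aseq_ge hs'.le) (tendsto_inv_atTop_nhds_zero_nat.const_mul _) (by
      filter_upwards with n
      have h1 := Real.log_le_log (g.Z_pos hs'.le n) (hZ n)
      have h2 : (0:ℝ) ≤ (n:ℝ)⁻¹ := by positivity
      rw [aseq]
      nlinarith)
  rw [pressure_eq]
  simpa using this

end helpers

/-- **Bowen's formula.** For a `C¹` conformal repeller `(Λ, f)` the Hausdorff dimension of `Λ`
coincides with its lower and upper box dimensions, and the common value is the unique zero
`s_crit` of the pressure function. -/
theorem bowen_formula {Λ : Type*} [MetricSpace Λ] [CompactSpace Λ] [Nonempty Λ]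
    (hpt : ∀ x : Λ, (𝓝[≠] x).NeBot)
    (f : Λ → Λ) (Df : Λ → ℝ)
    (hcont : Continuous f) (hsurj : Function.Surjective f)
    (hconf : IsConfDeriv f Df)
    (hexp : UnifExpanding f Df)
    (hopen : IsOpenMap f)
    (hfib : ∀ y : Λ, (f ⁻¹' {y}).Finite) :
    ∃ scrit : ℝ, 0 ≤ scrit ∧
      pressure f Df scrit = 0 ∧
      (∀ s : ℝ, 0 ≤ s → s < scrit → 0 < pressure f Df s) ∧
      (∀ s : ℝ, scrit < s → pressure f Df s < 0) ∧
      dimH (Set.univ : Set Λ) = ENNReal.ofReal scrit ∧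
      lowerBoxDim Λ = ENNReal.ofReal scrit ∧
      upperBoxDim Λ = ENNReal.ofReal scrit := by
  obtain ⟨C, hC, β, hβ, hexp⟩ := hexp
  have hC1 : C ≤ 1 := by
    have := hexp (Classical.arbitrary Λ) 0
    simpa [orbDeriv] using this
  have hpos : ∀ x, 0 < Df x := by
    intro x
    have h1 := hexp x 1
    have h2 : 0 < C * β ^ 1 := by positivity
    simp [orbDeriv] at h1 h2
    linarith
  obtain ⟨m, M, hm, hmM⟩ := exists_m hpt hconf hpos
  have hdist := fun (θ : ℝ) (hθ : 1 < θ) => distort hpt hconf hpos hθ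
  obtain ⟨ρ, hρ, hd⟩ := hdist 2 (by norm_num)
  obtain ⟨p, hp1, hp⟩ := exists_p hfib hpos hρ (fun c a b h1 h2 => (hd c a b h1 h2).1)
  have g : Good f Df C β (max M 1) p := ⟨hfib, hsurj, hpos, hC, hC1, hβ, hexp, le_max_right _ _,
    fun x => (hmM x).2.trans (le_max_left _ _), hp1, hp⟩
  obtain ⟨s₀, hs₀, hz, hP1, hP2⟩ := exists_zero (pressure f Df) (Real.log_pos hβ)
    (Real.log_nonneg g.M1) g.P_zero (fun s t hs ht => g.P_up hs ht) (fun s t hs ht => g.P_low hs ht)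
  have hU : upperBoxDim Λ ≤ ENNReal.ofReal s₀ := by
    have h1 : ∀ s', s₀ < s' → upperBoxDim Λ ≤ ENNReal.ofReal s' := by
      intro s' hs'
      obtain ⟨A, hA, h⟩ := g.upper hcont hopen hdist (s := (s₀ + s') / 2) (by linarith)
        (hP2 _ (by linarith))
      exact ubox_le (by linarith) hA h
    have h2 : Tendsto (fun s' : ℝ => ENNReal.ofReal s') (𝓝[>] s₀) (𝓝 (ENNReal.ofReal s₀)) :=
      ENNReal.continuous_ofReal.continuousAt.mono_left nhdsWithin_le_nhds
    apply ge_of_tendsto h2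
    filter_upwards [self_mem_nhdsWithin] with s' hs' using h1 s' hs'
  have hL : ENNReal.ofReal s₀ ≤ dimH (univ : Set Λ) := by
    borelize Λ
    by_contra hlt
    push Not at hlt
    obtain ⟨a, ha1, ha2⟩ := ENNReal.lt_iff_exists_nnreal_btwn.1 hlt
    have ha : (0:ℝ) < a := by
      have : (0:ℝ≥0∞) < a := lt_of_le_of_lt zero_le ha1
      exact_mod_cast this
    have ha3 : (a:ℝ) < s₀ := by
      rw [← ENNReal.ofReal_coe_nnreal, ENNReal.ofReal_lt_ofReal_iff'] at ha2
      exact ha2.1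
    have h0 := hausdorffMeasure_of_dimH_lt ha1
    have h1 := g.lower hdist (s' := ((a:ℝ) + s₀) / 2) ha (by linarith) h0
    have h2 := hP1 (((a:ℝ) + s₀) / 2) (by linarith) (by linarith)
    linarith
  have hDL := dimH_le_lbox (Λ := Λ)
  have hLU : lowerBoxDim Λ ≤ upperBoxDim Λ := liminf_le_limsup
  exact ⟨s₀, hs₀, hz, hP1, hP2, le_antisymm (hDL.trans (hLU.trans hU)) hL,
    le_antisymm (hLU.trans hU) (hL.trans hDL), le_antisymm hU (hL.trans (hDL.trans hLU))⟩


end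
end

section
/- Operator bounds Lemma: Let (Λ,f) be a strongly mixing C¹ conformal repeller with scale constants δ_f, λ₀, λ₁ as in (C2') and (C3'). For each s≥0 the lower and upper pressures agree and are finite: P̲(s)=P̄(s)=:P(s)∈ℝ. Moreover s↦s·log β+P(s) is non-increasing, s↦s·log‖Df‖+P(s) is non-decreasing, 0≤P(0)<∞, the function s↦P(s) is continuous and strictly decreasing on [0,∞), and P has a unique zero s_crit≥0. -/
open Filter Topology Metric Set
open scoped Classical

noncomputable section

/-- `M_n(s) = sup_y (L_sⁿ 1)(y) = sup_y Σ_{f^n x = y} (Df^{(n)}_x)^{-s}`. -/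
def Mn {Λ : Type*} [MetricSpace Λ] (f : Λ → Λ) (Df : Λ → ℝ) (s : ℝ) (n : ℕ) : ℝ :=
  ⨆ y : Λ, ∑' x : ↥(f^[n] ⁻¹' {y}), orbDeriv f Df n (x : Λ) ^ (-s)

/-- `m_n(s) = inf_y (L_sⁿ 1)(y)`. -/
def mn {Λ : Type*} [MetricSpace Λ] (f : Λ → Λ) (Df : Λ → ℝ) (s : ℝ) (n : ℕ) : ℝ :=
  ⨅ y : Λ, ∑' x : ↥(f^[n] ⁻¹' {y}), orbDeriv f Df n (x : Λ) ^ (-s)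


theorem aux_fib_finite {Λ : Type*} (f : Λ → Λ) (hfib : ∀ y : Λ, (f ⁻¹' {y}).Finite) (n : ℕ) :
    ∀ y : Λ, (f^[n] ⁻¹' {y}).Finite := by
  induction n with
  | zero => intro y; simp
  | succ n ih =>
    intro y
    have : f^[n+1] ⁻¹' {y} = ⋃ z ∈ f ⁻¹' {y}, f^[n] ⁻¹' {z} := by
      ext x
      simp [Function.iterate_succ_apply', -Function.iterate_succ]
    rw [this]
    exact (hfib y).biUnion (fun z _ => ih z)

def TL {Λ : Type*} (f : Λ → Λ) (hfib : ∀ y : Λ, (f ⁻¹' {y}).Finite) (w φ : Λ → ℝ) (y : Λ) : ℝ :=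
  ∑ x ∈ (hfib y).toFinset, w x * φ x

theorem TL_nonneg {Λ : Type*} (f : Λ → Λ) (hfib : ∀ y : Λ, (f ⁻¹' {y}).Finite) (w φ : Λ → ℝ)
    (hw : ∀ x, 0 ≤ w x) (hφ : ∀ x, 0 ≤ φ x) (n : ℕ) : ∀ y, 0 ≤ (TL f hfib w)^[n] φ y := by
  induction n with
  | zero => simpa using hφ
  | succ n ih =>
    intro y
    rw [Function.iterate_succ_apply']
    exact Finset.sum_nonneg fun x _ => mul_nonneg (hw x) (ih x)

theorem TL_le {Λ : Type*} (f : Λ → Λ) (hfib : ∀ y : Λ, (f ⁻¹' {y}).Finite) (w w' φ ψ : Λ → ℝ)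
    (a c : ℝ) (ha : 0 ≤ a) (hc : 0 ≤ c)
    (hw : ∀ x, 0 ≤ w x) (hw' : ∀ x, 0 ≤ w' x) (hww : ∀ x, w x ≤ a * w' x)
    (hψ : ∀ x, 0 ≤ ψ x) (hφψ : ∀ x, φ x ≤ c * ψ x) (n : ℕ) :
    ∀ y, (TL f hfib w)^[n] φ y ≤ a ^ n * c * (TL f hfib w')^[n] ψ y := by
  induction n with
  | zero => simpa using hφψ
  | succ n ih =>
    intro y
    rw [Function.iterate_succ_apply', Function.iterate_succ_apply']
    unfold TL
    rw [Finset.mul_sum]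
    apply Finset.sum_le_sum
    intro x _
    have h0 := TL_nonneg f hfib w' ψ hw' hψ n x
    calc w x * (TL f hfib w)^[n] φ x ≤ w x * (a ^ n * c * (TL f hfib w')^[n] ψ x) :=
          mul_le_mul_of_nonneg_left (ih x) (hw x)
      _ ≤ (a * w' x) * (a ^ n * c * (TL f hfib w')^[n] ψ x) :=
          mul_le_mul_of_nonneg_right (hww x) (by positivity)
      _ = _ := by unfold TL; ring

theorem TL_tsum {Λ : Type*} [MetricSpace Λ] (f : Λ → Λ) (hfib : ∀ y : Λ, (f ⁻¹' {y}).Finite)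
    (Df : Λ → ℝ) (hD : ∀ x, 0 < Df x) (s : ℝ) (n : ℕ) : ∀ y,
    ∑' x : ↥(f^[n] ⁻¹' {y}), orbDeriv f Df n (x : Λ) ^ (-s)
      = (TL f hfib (fun x => Df x ^ (-s)))^[n] (fun _ => 1) y := by
  have key : ∀ n y, ∑' x : ↥(f^[n] ⁻¹' {y}), orbDeriv f Df n (x : Λ) ^ (-s) =
      ∑ x ∈ (aux_fib_finite f hfib n y).toFinset, orbDeriv f Df n x ^ (-s) := by
    intro n y
    rw [← Finset.tsum_subtype]
    have : (f^[n] ⁻¹' {y}) = ((aux_fib_finite f hfib n y).toFinset : Set Λ) := by simp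
    rw [tsum_congr_set_coe (fun x => orbDeriv f Df n x ^ (-s)) this]
    rfl
  simp only [key]
  induction n with
  | zero =>
    intro y
    have : (aux_fib_finite f hfib 0 y).toFinset = {y} := by ext; simp
    rw [this]; simp [orbDeriv]
  | succ n ih =>
    intro y
    rw [Function.iterate_succ_apply', TL,
      ← Finset.sum_fiberwise_of_maps_to (t := (hfib y).toFinset) (g := f^[n])]
    · apply Finset.sum_congr rfl
      intro z hz
      rw [← ih z, Finset.mul_sum]
      have : (aux_fib_finite f hfib (n+1) y).toFinset.filter (fun i => f^[n] i = z)
          = (aux_fib_finite f hfib n z).toFinset := by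
        ext x
        simp only [Finite.mem_toFinset, mem_preimage, mem_singleton_iff] at hz
        simp only [Finset.mem_filter, Finite.mem_toFinset, mem_preimage, mem_singleton_iff,
          Function.iterate_succ_apply']
        constructor
        · exact fun h => h.2
        · rintro rfl; exact ⟨hz, rfl⟩
      rw [this]
      apply Finset.sum_congr rfl
      intro x hx
      simp only [Finite.mem_toFinset, mem_preimage, mem_singleton_iff] at hx
      rw [orbDeriv, Finset.prod_range_succ, hx, Real.mul_rpow, mul_comm, orbDeriv]
      · exact Finset.prod_nonneg fun _ _ => (hD _).le
      · exact (hD _).le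
    · intro x hx
      simpa [Function.iterate_succ_apply', -Function.iterate_succ] using hx

theorem TL_single {Λ : Type*} (f : Λ → Λ) (hfib : ∀ y : Λ, (f ⁻¹' {y}).Finite) (w φ : Λ → ℝ)
    (b : ℝ) (hb : 0 ≤ b) (hw : ∀ x, b ≤ w x) (hφ : ∀ x, 0 ≤ φ x) (n : ℕ) : ∀ z,
    b ^ n * φ z ≤ (TL f hfib w)^[n] φ (f^[n] z) := by
  have hw0 : ∀ x, 0 ≤ w x := fun x => hb.trans (hw x)
  induction n with
  | zero => simp
  | succ n ih =>
    intro z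
    rw [Function.iterate_succ_apply', Function.iterate_succ_apply']
    calc b ^ (n+1) * φ z = b * (b ^ n * φ z) := by ring
      _ ≤ w (f^[n] z) * (TL f hfib w)^[n] φ (f^[n] z) :=
          mul_le_mul (hw _) (ih z) (mul_nonneg (pow_nonneg hb _) (hφ z)) (hw0 _)
      _ ≤ _ := by
          unfold TL
          apply Finset.single_le_sum (f := fun x => w x * (TL f hfib w)^[n] φ x)
          · intro x _
            exact mul_nonneg (hw0 x) (TL_nonneg f hfib w φ hw0 hφ n x)
          · simp

theorem TL_distort {Λ : Type*} [MetricSpace Λ] (f : Λ → Λ)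
    (hfib : ∀ y : Λ, (f ⁻¹' {y}).Finite) (w : Λ → ℝ) (hw : ∀ x, 0 ≤ w x)
    (lam₀ δf δ a : ℝ) (hlam₀ : 1 < lam₀) (hδ : δ ≤ δf / 2)
    (hC2 : ∀ u v : Λ, dist u v < δf → lam₀ * dist u v ≤ dist (f u) (f v))
    (hC3' : ∀ x : Λ, ball (f x) δf ⊆ f '' ball x δf) (ha : 0 ≤ a)
    (hdis : ∀ x x', dist x x' < δ → w x ≤ a * w x') (n : ℕ) : ∀ y y', dist y y' < δ →
    (TL f hfib w)^[n] (fun _ => 1) y ≤ a ^ n * (TL f hfib w)^[n] (fun _ => 1) y' := by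
  induction n with
  | zero => simp
  | succ n ih =>
    intro y y' hy
    have hδ0 : 0 < δ := dist_nonneg.trans_lt hy
    have hn := TL_nonneg f hfib w (fun _ => 1) hw (fun _ => zero_le_one) n
    rw [Function.iterate_succ_apply']
    have hex : ∀ x, ∃ x', f x = y → (f x' = y' ∧ dist x x' < δ) := by
      intro x
      by_cases hx : f x = y
      · have : y' ∈ ball (f x) δf := by
          rw [mem_ball, hx, dist_comm]; linarith
        obtain ⟨x', hx', h2⟩ := hC3' x this
        refine ⟨x', fun _ => ⟨h2, ?_⟩⟩
        rw [mem_ball, dist_comm] at hx'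
        have := hC2 x x' hx'
        rw [hx, h2] at this
        nlinarith [dist_nonneg (x := x) (y := x')]
      · exact ⟨x, fun h => absurd h hx⟩
    choose g hg using hex
    have hinj : Set.InjOn g ((hfib y).toFinset : Set Λ) := by
      intro x1 h1 x2 h2 h12
      simp only [Finite.coe_toFinset, mem_preimage, mem_singleton_iff] at h1 h2
      have d1 := (hg x1 h1).2
      have d2 := (hg x2 h2).2
      rw [h12] at d1
      rw [dist_comm] at d2
      have d3 := dist_triangle x1 (g x2) x2
      have := hC2 x1 x2 (by linarith)
      rw [h1, h2, dist_self] at this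
      apply dist_le_zero.1
      nlinarith [dist_nonneg (x := x1) (y := x2)]
    unfold TL
    rw [Finset.mul_sum]
    calc ∑ x ∈ (hfib y).toFinset, w x * (TL f hfib w)^[n] (fun _ => 1) x
        ≤ ∑ x ∈ (hfib y).toFinset,
            a ^ (n+1) * (w (g x) * (TL f hfib w)^[n] (fun _ => 1) (g x)) := by
          apply Finset.sum_le_sum
          intro x hx
          simp only [Finite.mem_toFinset, mem_preimage, mem_singleton_iff] at hx
          have hd := (hg x hx).2
          calc w x * (TL f hfib w)^[n] (fun _ => 1) x
              ≤ (a * w (g x)) * (a ^ n * (TL f hfib w)^[n] (fun _ => 1) (g x)) :=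
                mul_le_mul (hdis _ _ hd) (ih _ _ hd) (hn x) (mul_nonneg ha (hw _))
            _ = _ := by ring
      _ = ∑ x ∈ (hfib y).toFinset.image g,
            a ^ (n+1) * (w x * (TL f hfib w)^[n] (fun _ => 1) x) := by
          rw [Finset.sum_image hinj]
      _ ≤ _ := by
          apply Finset.sum_le_sum_of_subset_of_nonneg
          · intro x hx
            simp only [Finset.mem_image, Finite.mem_toFinset, mem_preimage,
              mem_singleton_iff] at hx ⊢
            obtain ⟨z, hz, rfl⟩ := hx
            exact (hg z hz).1
          · intro x _ _
            exact mul_nonneg (pow_nonneg ha _) (mul_nonneg (hw x) (hn x))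

theorem TL_pressure {Λ : Type*} [MetricSpace Λ] [Nonempty Λ] (f : Λ → Λ)
    (hsurj : Function.Surjective f)
    (hfib : ∀ y : Λ, (f ⁻¹' {y}).Finite)
    (hmix : ∀ δ : ℝ, 0 < δ → ∃ n₀ : ℕ, ∀ x : Λ, f^[n₀] '' ball x δ = Set.univ)
    (w : Λ → ℝ) (b : ℝ) (hb : 0 < b) (hw : ∀ x, b ≤ w x)
    (lam₀ δf : ℝ) (hlam₀ : 1 < lam₀) (hδf : 0 < δf)
    (hC2 : ∀ u v : Λ, dist u v < δf → lam₀ * dist u v ≤ dist (f u) (f v))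
    (hC3' : ∀ x : Λ, ball (f x) δf ⊆ f '' ball x δf)
    (hdis : ∀ ε : ℝ, 0 < ε → ∃ δ > 0, ∀ x x', dist x x' < δ → w x ≤ Real.exp ε * w x') :
    (∀ n, BddAbove (range fun y => (TL f hfib w)^[n] (fun _ => 1) y)) ∧
    (∀ n y, b ^ n ≤ (TL f hfib w)^[n] (fun _ => 1) y) ∧
    ∃ P : ℝ, Tendsto (fun n : ℕ => (n : ℝ)⁻¹ *
        Real.log (⨅ y, (TL f hfib w)^[n] (fun _ => 1) y)) atTop (𝓝 P) ∧
      Tendsto (fun n : ℕ => (n : ℝ)⁻¹ *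
        Real.log (⨆ y, (TL f hfib w)^[n] (fun _ => 1) y)) atTop (𝓝 P) := by
  have hw0 : ∀ x, 0 ≤ w x := fun x => hb.le.trans (hw x)
  set A : ℕ → Λ → ℝ := fun n y => (TL f hfib w)^[n] (fun _ => 1) y with hA
  have hlow : ∀ n y, b ^ n ≤ A n y := by
    intro n y
    obtain ⟨z, rfl⟩ := hsurj.iterate n y
    simpa using TL_single f hfib w (fun _ => 1) b hb.le hw (fun _ => zero_le_one) n z
  have key : ∀ ε : ℝ, 0 < ε → ∃ (n₀ : ℕ) (K : ℝ), 0 < K ∧ ∀ n y z,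
      K * A n z ≤ Real.exp ε ^ n * A (n₀ + n) y := by
    intro ε hε
    obtain ⟨δ, hδ, hd⟩ := hdis ε hε
    obtain ⟨n₀, hn₀⟩ := hmix (min δ (δf/2)) (by positivity)
    refine ⟨n₀, b ^ n₀, by positivity, fun n y z => ?_⟩
    have : y ∈ f^[n₀] '' ball z (min δ (δf/2)) := by rw [hn₀]; trivial
    obtain ⟨z', hz', rfl⟩ := this
    have h1 := TL_distort f hfib w hw0 lam₀ δf (min δ (δf/2)) (Real.exp ε) hlam₀ (min_le_right _ _)
      hC2 hC3' (Real.exp_pos _).le (fun x x' h => hd x x' (h.trans_le (min_le_left _ _))) n z z'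
      (by rw [dist_comm]; exact hz')
    have h2 := TL_single f hfib w (A n) b hb.le hw
      (TL_nonneg f hfib w _ hw0 (fun _ => zero_le_one) n) n₀ z'
    have h3 : (TL f hfib w)^[n₀] (A n) (f^[n₀] z') = A (n₀ + n) (f^[n₀] z') := by
      simp only [hA]; rw [Function.iterate_add_apply]
    rw [h3] at h2
    calc b ^ n₀ * A n z ≤ b ^ n₀ * (Real.exp ε ^ n * A n z') :=
          mul_le_mul_of_nonneg_left h1 (by positivity)
      _ = Real.exp ε ^ n * (b ^ n₀ * A n z') := by ring
      _ ≤ _ := mul_le_mul_of_nonneg_left h2 (by positivity)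
  have hbdd : ∀ n, BddAbove (range (A n)) := by
    intro n
    obtain ⟨n₀, K, hK, h⟩ := key 1 one_pos
    inhabit Λ
    refine ⟨Real.exp 1 ^ n * A (n₀ + n) default / K, ?_⟩
    rintro _ ⟨z, rfl⟩
    rw [le_div_iff₀ hK, mul_comm]
    exact h n default z
  have hbddb : ∀ n, BddBelow (range (A n)) := fun n => ⟨b ^ n, by rintro _ ⟨z, rfl⟩; exact hlow n z⟩
  refine ⟨hbdd, hlow, ?_⟩
  set M : ℕ → ℝ := fun n => ⨆ y, A n y with hM
  set m : ℕ → ℝ := fun n => ⨅ y, A n y with hm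
  have hAM : ∀ n y, A n y ≤ M n := fun n y => le_ciSup (hbdd n) y
  have hmA : ∀ n y, m n ≤ A n y := fun n y => ciInf_le (hbddb n) y
  have hbm : ∀ n, b ^ n ≤ m n := fun n => le_ciInf (hlow n)
  have hmpos : ∀ n, 0 < m n := fun n => lt_of_lt_of_le (by positivity) (hbm n)
  have hmM : ∀ n, m n ≤ M n := by
    intro n
    inhabit Λ
    exact (hmA n default).trans (hAM n default)
  have hMpos : ∀ n, 0 < M n := fun n => (hmpos n).trans_le (hmM n)
  have hsub : Subadditive (fun n => Real.log (M n)) := by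
    intro p q
    dsimp only
    rw [← Real.log_mul (hMpos _).ne' (hMpos _).ne']
    apply Real.log_le_log (hMpos _)
    apply ciSup_le
    intro y
    have := TL_le f hfib w w (A q) (fun _ => 1) 1 (M q) zero_le_one (hMpos q).le hw0 hw0
      (by simp) (by simp) (by simpa using hAM q) p y
    rw [one_pow, one_mul] at this
    have h3 : (TL f hfib w)^[p] (A q) y = A (p + q) y := by
      simp only [hA]; rw [Function.iterate_add_apply]
    rw [h3] at this
    refine this.trans ?_
    rw [mul_comm]
    exact mul_le_mul_of_nonneg_right (hAM p y) (hMpos q).le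
  have hlogb : ∀ n : ℕ, n * Real.log b ≤ Real.log (M n) := by
    intro n
    rw [← Real.log_pow]
    exact Real.log_le_log (by positivity) ((hbm n).trans (hmM n))
  have hbb : BddBelow (range fun n : ℕ => Real.log (M n) / n) := by
    refine ⟨min (Real.log b) 0, ?_⟩
    rintro _ ⟨n, rfl⟩
    dsimp only
    rcases Nat.eq_zero_or_pos n with rfl | hn
    · simp
    · have hn' : (0:ℝ) < n := by exact_mod_cast hn
      refine (min_le_left _ _).trans ?_
      rw [le_div_iff₀ hn', mul_comm]
      exact hlogb n
  have hlim := hsub.tendsto_lim hbb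
  set P := hsub.lim
  have hlimM : Tendsto (fun n : ℕ => (n : ℝ)⁻¹ * Real.log (M n)) atTop (𝓝 P) := by
    refine hlim.congr fun n => ?_
    rw [div_eq_mul_inv, mul_comm]
  refine ⟨P, ?_, hlimM⟩
  apply tendsto_order.2
  constructor
  · intro c hc
    set ε := (P - c) / 2 with hε
    have hε0 : 0 < ε := by rw [hε]; linarith
    obtain ⟨n₀, K, hK, h⟩ := key ε hε0
    -- log (m (n₀+n)) ≥ log K - ε n + log (M n)
    have h1 : ∀ n : ℕ, Real.log K - n * ε + Real.log (M n) ≤ Real.log (m (n₀ + n)) := by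
      intro n
      have : K * M n ≤ Real.exp ε ^ n * m (n₀ + n) := by
        rw [← div_le_iff₀' (by positivity)]
        apply le_ciInf
        intro y
        rw [div_le_iff₀' (by positivity), ← le_div_iff₀' hK]
        apply ciSup_le
        intro z
        rw [le_div_iff₀' hK]
        exact h n y z
      have := Real.log_le_log (mul_pos hK (hMpos n)) this
      rw [Real.log_mul hK.ne' (hMpos n).ne',
        Real.log_mul (by positivity) (hmpos _).ne', Real.log_pow, Real.log_exp] at this
      linarith
    have h2 : Tendsto (fun n : ℕ => (((n₀ + n : ℕ) : ℝ))⁻¹ * (Real.log K - n * ε + Real.log (M n)))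
        atTop (𝓝 (P - ε)) := by
      have e0 : Tendsto (fun n : ℕ => (((n₀ + n : ℕ) : ℝ))⁻¹) atTop (𝓝 0) := by
        have := (tendsto_inv_atTop_nhds_zero_nat (𝕜 := ℝ)).comp (tendsto_add_atTop_nat n₀)
        refine this.congr fun n => ?_
        simp [add_comm]
      have e1 : Tendsto (fun n : ℕ => (((n₀ + n : ℕ) : ℝ))⁻¹ * n) atTop (𝓝 1) := by
        have : Tendsto (fun n : ℕ => 1 - (((n₀ + n : ℕ) : ℝ))⁻¹ * n₀) atTop (𝓝 (1 - 0 * n₀)) :=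
          tendsto_const_nhds.sub (e0.mul_const _)
        rw [zero_mul, sub_zero] at this
        refine this.congr' ?_
        filter_upwards [eventually_gt_atTop 0] with n hn
        have : (0:ℝ) < n := by exact_mod_cast hn
        have : (0:ℝ) < (n₀ + n : ℕ) := by exact_mod_cast (by omega)
        field_simp
        push_cast; ring
      have := ((e0.mul_const (Real.log K)).sub (e1.mul_const ε)).add (e1.mul hlimM)
      simp only [zero_mul, one_mul, zero_sub] at this
      rw [show P - ε = -ε + P by ring]
      refine this.congr' ?_
      filter_upwards [eventually_gt_atTop 0] with n hn
      have : (0:ℝ) < n := by exact_mod_cast hn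
      field_simp
    have h3 : ∀ᶠ n in atTop, c < (((n₀ + n : ℕ) : ℝ))⁻¹ * Real.log (m (n₀ + n)) := by
      filter_upwards [h2.eventually_const_lt (show c < P - ε by rw [hε]; linarith)] with n hn
      exact hn.trans_le (mul_le_mul_of_nonneg_left (h1 n) (by positivity))
    rw [eventually_atTop] at h3 ⊢
    obtain ⟨N, hN⟩ := h3
    refine ⟨n₀ + N, fun k hk => ?_⟩
    obtain ⟨j, rfl⟩ := Nat.exists_eq_add_of_le hk
    have := hN (N + j) (by omega)
    rw [← add_assoc] at this
    exact this
  · intro c hc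
    filter_upwards [hlimM.eventually_lt_const hc] with n hn
    exact lt_of_le_of_lt (mul_le_mul_of_nonneg_left (Real.log_le_log (hmpos n) (hmM n))
      (by positivity)) hn

theorem aux_tendsto {Λ : Type*} [MetricSpace Λ] (f : Λ → Λ) (Df : Λ → ℝ)
    (hconf : IsConfDeriv f Df) (y : Λ) :
    Tendsto (fun u => dist (f u) (f y) / dist u y) (𝓝[≠] y) (𝓝 (Df y)) := by
  have h : Tendsto (fun u => (u, y)) (𝓝[≠] y) ((𝓝 y ×ˢ 𝓝 y) ⊓ 𝓟 {p : Λ × Λ | p.1 ≠ p.2}) := by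
    apply tendsto_inf.2 ⟨?_, ?_⟩
    · exact (tendsto_id.mono_left nhdsWithin_le_nhds).prodMk tendsto_const_nhds
    · rw [tendsto_principal]
      exact self_mem_nhdsWithin
  exact (hconf y).comp h

theorem aux_cont {Λ : Type*} [MetricSpace Λ] (hpt : ∀ x : Λ, (𝓝[≠] x).NeBot)
    (f : Λ → Λ) (Df : Λ → ℝ)
    (hconf : IsConfDeriv f Df) : Continuous Df := by
  rw [continuous_iff_continuousAt]
  intro x
  rw [ContinuousAt, Metric.tendsto_nhds]
  intro ε hε
  have h := Metric.tendsto_nhds.1 (hconf x) (ε/2) (by positivity)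
  rw [eventually_inf_principal, ← nhds_prod_eq, Metric.eventually_nhds_iff] at h
  obtain ⟨δ, hδ, h⟩ := h
  filter_upwards [Metric.ball_mem_nhds x hδ] with y hy
  have := hpt y
  have hle : dist (Df y) (Df x) ≤ ε/2 := by
    apply le_of_tendsto ((aux_tendsto f Df hconf y).dist tendsto_const_nhds)
    have : ∀ᶠ u in 𝓝[≠] y, u ∈ ball x δ := nhdsWithin_le_nhds (isOpen_ball.mem_nhds hy)
    filter_upwards [this, self_mem_nhdsWithin] with u hu hne
    refine (h (y := (u, y)) ?_ hne).le
    rw [Prod.dist_eq]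
    exact max_lt hu hy
  linarith

/-- **Operator bounds Lemma.** For a strongly mixing `C¹` conformal repeller, the lower and
upper pressures agree, are finite (the limit exists in `ℝ`), and the resulting pressure
function is continuous, strictly decreasing and has a unique zero `s_crit ≥ 0`. -/
theorem operator_bounds {Λ : Type*} [MetricSpace Λ] [CompactSpace Λ] [Nonempty Λ]
    (hpt : ∀ x : Λ, (𝓝[≠] x).NeBot)
    (f : Λ → Λ) (Df : Λ → ℝ)
    (hcont : Continuous f) (hsurj : Function.Surjective f)
    (hconf : IsConfDeriv f Df)
    (hexp : UnifExpanding f Df)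
    (hopen : IsOpenMap f)
    (hfib : ∀ y : Λ, (f ⁻¹' {y}).Finite)
    (hmix : ∀ δ : ℝ, 0 < δ → ∃ n₀ : ℕ, ∀ x : Λ, f^[n₀] '' ball x δ = Set.univ)
    (β lam₀ lam₁ δf : ℝ)
    (hβ : 1 < β) (hDfβ : ∀ x : Λ, β ≤ Df x)
    (hlam₀ : 1 < lam₀) (hlam₀β : lam₀ < β) (hδf : 0 < δf)
    (hC2' : ∀ u v : Λ, u ≠ v → dist u v < δf →
      lam₀ ≤ dist (f u) (f v) / dist u v ∧ dist (f u) (f v) / dist u v ≤ lam₁)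
    (hC3' : ∀ x : Λ, ball (f x) δf ⊆ f '' ball x δf) :
    ∃ P : ℝ → ℝ,
      (∀ s : ℝ, 0 ≤ s →
        Filter.Tendsto (fun n : ℕ => (n : ℝ)⁻¹ * Real.log (mn f Df s n))
          Filter.atTop (𝓝 (P s)) ∧
        Filter.Tendsto (fun n : ℕ => (n : ℝ)⁻¹ * Real.log (Mn f Df s n))
          Filter.atTop (𝓝 (P s))) ∧
      (∀ s t : ℝ, 0 ≤ s → s ≤ t →
        t * Real.log β + P t ≤ s * Real.log β + P s) ∧
      (∀ s t : ℝ, 0 ≤ s → s ≤ t →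
        s * Real.log (⨆ x : Λ, Df x) + P s ≤ t * Real.log (⨆ x : Λ, Df x) + P t) ∧
      0 ≤ P 0 ∧
      ContinuousOn P (Set.Ici 0) ∧
      StrictAntiOn P (Set.Ici 0) ∧
      (∃! s : ℝ, 0 ≤ s ∧ P s = 0) := by
  have hD0 : ∀ x, 0 < Df x := fun x => by linarith [hDfβ x]
  have hDc := aux_cont hpt f Df hconf
  have hDbdd : BddAbove (range Df) := (isCompact_range hDc).bddAbove
  set D : ℝ := ⨆ x : Λ, Df x with hDdef
  have hDD : ∀ x, Df x ≤ D := fun x => le_ciSup hDbdd x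
  have hDpos : 0 < D := by
    inhabit Λ
    exact (hD0 default).trans_le (hDD default)
  have hβ0 : 0 < β := by linarith
  have hlogβ : 0 < Real.log β := Real.log_pos hβ
  have hC2 : ∀ u v : Λ, dist u v < δf → lam₀ * dist u v ≤ dist (f u) (f v) := by
    intro u v h
    by_cases huv : u = v
    · simp [huv]
    · have := (hC2' u v huv h).1
      rwa [le_div_iff₀ (dist_pos.2 huv)] at this
  have hlc : UniformContinuous (fun x => Real.log (Df x)) :=
    CompactSpace.uniformContinuous_of_continuous (hDc.log fun x => (hD0 x).ne')
  have hpr : ∀ s : ℝ, 0 ≤ s → _ := fun s hs =>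
    TL_pressure f hsurj hfib hmix (fun x => Df x ^ (-s)) (D ^ (-s)) (by positivity)
      (fun x => Real.rpow_le_rpow_of_nonpos (hD0 x) (hDD x) (by linarith)) lam₀ δf hlam₀ hδf
      hC2 hC3' (by
        intro ε hε
        obtain ⟨δ, hδ, h⟩ := Metric.uniformContinuous_iff.1 hlc (ε / (s + 1)) (by positivity)
        refine ⟨δ, hδ, fun x x' hx => ?_⟩
        have h1 := h hx
        rw [Real.dist_eq, abs_lt, lt_div_iff₀ (by positivity), ] at h1
        have h2 := (abs_lt.1 (h hx)).1
        rw [Real.rpow_def_of_pos (hD0 x), Real.rpow_def_of_pos (hD0 x'), ← Real.exp_add]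
        apply Real.exp_le_exp.2
        have h3 : s * (ε / (s+1)) ≤ ε := by
          rw [← mul_div_assoc, div_le_iff₀ (by positivity)]
          nlinarith
        nlinarith)
  choose P0 hP0 using fun s : {s : ℝ // 0 ≤ s} => (hpr s.1 s.2).2.2
  set P : ℝ → ℝ := fun s => if h : 0 ≤ s then P0 ⟨s, h⟩ else 0 with hP
  have hM : ∀ s n, Mn f Df s n = ⨆ y, (TL f hfib (fun x => Df x ^ (-s)))^[n] (fun _ => 1) y := by
    intro s n
    unfold Mn
    simp only [TL_tsum f hfib Df hD0 s n]
  have hm : ∀ s n, mn f Df s n = ⨅ y, (TL f hfib (fun x => Df x ^ (-s)))^[n] (fun _ => 1) y := by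
    intro s n
    unfold mn
    simp only [TL_tsum f hfib Df hD0 s n]
  have hlim : ∀ s : ℝ, 0 ≤ s →
        Filter.Tendsto (fun n : ℕ => (n : ℝ)⁻¹ * Real.log (mn f Df s n))
          Filter.atTop (𝓝 (P s)) ∧
        Filter.Tendsto (fun n : ℕ => (n : ℝ)⁻¹ * Real.log (Mn f Df s n))
          Filter.atTop (𝓝 (P s)) := by
    intro s hs
    simp only [hM, hm, hP, dif_pos hs]
    exact hP0 ⟨s, hs⟩
  have hMlow : ∀ s, 0 ≤ s → ∀ n, (D ^ (-s)) ^ n ≤ Mn f Df s n := by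
    intro s hs n
    inhabit Λ
    rw [hM]
    exact ((hpr s hs).2.1 n default).trans (le_ciSup ((hpr s hs).1 n) default)
  have hMpos : ∀ s, 0 ≤ s → ∀ n, 0 < Mn f Df s n := fun s hs n =>
    lt_of_lt_of_le (by positivity) (hMlow s hs n)
  have hcomp : ∀ s t c : ℝ, 0 ≤ s → 0 ≤ t → (∀ x, Df x ^ (-s) ≤ Real.exp c * Df x ^ (-t)) →
      P s ≤ c + P t := by
    intro s t c hs ht h
    refine le_of_tendsto_of_tendsto (hlim s hs).2 ((hlim t ht).2.const_add c) ?_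
    filter_upwards [eventually_gt_atTop 0] with n hn
    have hn' : (0:ℝ) < n := by exact_mod_cast hn
    have h1 : Mn f Df s n ≤ Real.exp c ^ n * Mn f Df t n := by
      rw [hM s]
      apply ciSup_le
      intro y
      have := TL_le f hfib (fun x => Df x ^ (-s)) (fun x => Df x ^ (-t)) (fun _ => 1) (fun _ => 1)
        (Real.exp c) 1 (Real.exp_pos c).le zero_le_one
        (fun x => (Real.rpow_pos_of_pos (hD0 x) _).le)
        (fun x => (Real.rpow_pos_of_pos (hD0 x) _).le) h (by simp) (by simp) n y
      rw [mul_one] at this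
      refine this.trans (mul_le_mul_of_nonneg_left ?_ (by positivity))
      rw [hM t]
      exact le_ciSup ((hpr t ht).1 n) y
    have h2 := Real.log_le_log (hMpos s hs n) h1
    rw [Real.log_mul (by positivity) (hMpos t ht n).ne', Real.log_pow, Real.log_exp] at h2
    calc (n:ℝ)⁻¹ * Real.log (Mn f Df s n) ≤ (n:ℝ)⁻¹ * (n * c + Real.log (Mn f Df t n)) :=
          mul_le_mul_of_nonneg_left h2 (by positivity)
      _ = _ := by field_simp
  have hmono1 : ∀ s t : ℝ, 0 ≤ s → s ≤ t →
        t * Real.log β + P t ≤ s * Real.log β + P s := by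
    intro s t hs hst
    have := hcomp t s (-(t - s) * Real.log β) (hs.trans hst) hs (by
      intro x
      rw [Real.rpow_def_of_pos (hD0 x), Real.rpow_def_of_pos (hD0 x), ← Real.exp_add]
      apply Real.exp_le_exp.2
      have := Real.log_le_log hβ0 (hDfβ x)
      nlinarith)
    linarith
  have hmono2 : ∀ s t : ℝ, 0 ≤ s → s ≤ t →
        s * Real.log D + P s ≤ t * Real.log D + P t := by
    intro s t hs hst
    have := hcomp s t ((t - s) * Real.log D) hs (hs.trans hst) (by
      intro x
      rw [Real.rpow_def_of_pos (hD0 x), Real.rpow_def_of_pos (hD0 x), ← Real.exp_add]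
      apply Real.exp_le_exp.2
      have := Real.log_le_log (hD0 x) (hDD x)
      nlinarith)
    linarith
  have hanti : StrictAntiOn P (Set.Ici 0) := by
    intro s hs t ht hst
    have := hmono1 s t hs hst.le
    nlinarith
  have hP00 : 0 ≤ P 0 := by
    refine ge_of_tendsto (hlim 0 le_rfl).2 (Eventually.of_forall fun n => ?_)
    have := hMlow 0 le_rfl n
    simp only [neg_zero, Real.rpow_zero, one_pow] at this
    exact mul_nonneg (by positivity) (Real.log_nonneg this)
  have hlogD : 0 ≤ Real.log D := by
    inhabit Λ
    exact hlogβ.le.trans (Real.log_le_log hβ0 ((hDfβ default).trans (hDD default)))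
  have hcontP : ContinuousOn P (Set.Ici 0) := by
    have hl : LipschitzOnWith (Real.toNNReal (Real.log D)) P (Set.Ici 0) := by
      apply LipschitzOnWith.of_dist_le_mul
      have main : ∀ s t : ℝ, 0 ≤ s → s ≤ t → |P s - P t| ≤ Real.log D * |s - t| := by
        intro s t hs hst
        have h1 := hmono1 s t hs hst
        have h2 := hmono2 s t hs hst
        rw [abs_of_nonpos (show s - t ≤ 0 by linarith), abs_of_nonneg (by nlinarith)]
        nlinarith
      intro s hs t ht
      rw [Real.coe_toNNReal _ hlogD, Real.dist_eq, Real.dist_eq]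
      rcases le_total s t with h | h
      · exact main s t hs h
      · rw [abs_sub_comm, abs_sub_comm s t]; exact main t s ht h
    exact hl.continuousOn
  refine ⟨P, hlim, hmono1, hmono2, hP00, hcontP, hanti, ?_⟩
  set T := P 0 / Real.log β with hT
  have hT0 : 0 ≤ T := by positivity
  have hPT : P T ≤ 0 := by
    have := hmono1 0 T le_rfl hT0
    rw [hT, div_mul_cancel₀ _ hlogβ.ne', ← hT] at this
    linarith
  obtain ⟨s, hs, hs0⟩ := intermediate_value_Icc' hT0 (hcontP.mono Icc_subset_Ici_self)
    (show (0:ℝ) ∈ Icc (P T) (P 0) from ⟨hPT, hP00⟩)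
  refine ⟨s, ⟨hs.1, hs0⟩, ?_⟩
  rintro t ⟨ht, ht0⟩
  exact hanti.injOn ht hs.1 (ht0.trans hs0.symm)

end
end

section
/- Lower bound for the Hausdorff dimension: Let (Λ,f) be a strongly mixing C¹ conformal repeller with scale constants δ_f, λ₀, λ₁ as in (C2') and (C3'), and let s_crit be the unique zero of the pressure P(s). For every 0≤s<s_crit there is a constant c(s)>0 such that every countable cover of Λ by open sets U_α of diameter less than δ_f satisfies Σ_α (diam U_α)^s ≥ c(s). Consequently the s-dimensional Hausdorff measure of Λ is positive for every s<s_crit, and dimH Λ ≥ s_crit. -/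
open Filter Topology Metric Set MeasureTheory
open scoped Classical ENNReal

noncomputable section

section aux

variable {Λ : Type*} [MetricSpace Λ]

lemma aux_neBot (hpt : ∀ x : Λ, (𝓝[≠] x).NeBot) (x : Λ) :
    ((𝓝 x ×ˢ 𝓝 x) ⊓ 𝓟 {p : Λ × Λ | p.1 ≠ p.2}).NeBot := by
  have := hpt x
  have h : Tendsto (fun u : Λ => (u, x)) (𝓝[≠] x)
      ((𝓝 x ×ˢ 𝓝 x) ⊓ 𝓟 {p : Λ × Λ | p.1 ≠ p.2}) := by
    refine tendsto_inf.2 ⟨?_, ?_⟩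
    · exact (tendsto_id.mono_left nhdsWithin_le_nhds).prodMk tendsto_const_nhds
    · refine tendsto_principal.2 ?_
      filter_upwards [self_mem_nhdsWithin] with u hu
      exact hu
  exact h.neBot

/-- ratios in an open set bound the derivative -/
lemma aux_bounds (hpt : ∀ x : Λ, (𝓝[≠] x).NeBot) {f : Λ → Λ} {Df : Λ → ℝ}
    (hconf : IsConfDeriv f Df) {V : Set Λ} (hV : IsOpen V) {a b : ℝ}
    (h : ∀ u ∈ V, ∀ v ∈ V, u ≠ v → a ≤ dist (f u) (f v) / dist u v ∧
      dist (f u) (f v) / dist u v ≤ b) {x : Λ} (hx : x ∈ V) : a ≤ Df x ∧ Df x ≤ b := by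
  have := aux_neBot hpt x
  have hev : ∀ᶠ p : Λ × Λ in ((𝓝 x ×ˢ 𝓝 x) ⊓ 𝓟 {p : Λ × Λ | p.1 ≠ p.2}),
      p.1 ∈ V ∧ p.2 ∈ V ∧ p.1 ≠ p.2 := by
    rw [eventually_inf_principal]
    filter_upwards [prod_mem_prod (hV.mem_nhds hx) (hV.mem_nhds hx)] with p hp hne
    exact ⟨hp.1, hp.2, hne⟩
  constructor
  · refine ge_of_tendsto (hconf x) ?_
    filter_upwards [hev] with p hp
    exact (h _ hp.1 _ hp.2.1 hp.2.2).1
  · refine le_of_tendsto (hconf x) ?_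
    filter_upwards [hev] with p hp
    exact (h _ hp.1 _ hp.2.1 hp.2.2).2

lemma aux_scale [CompactSpace Λ] (hpt : ∀ x : Λ, (𝓝[≠] x).NeBot) {f : Λ → Λ} {Df : Λ → ℝ}
    (hconf : IsConfDeriv f Df) (hD : ∀ x, 0 < Df x) {q : ℝ} (hq : 1 < q) :
    ∃ δ > 0, ∀ u v : Λ, dist u v < δ → dist (f u) (f v) ≤ q * Df u * dist u v := by
  have key : ∀ x : Λ, ∃ V : Set Λ, IsOpen V ∧ x ∈ V ∧ ∃ a b : ℝ, b ≤ q * a ∧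
      ∀ u ∈ V, ∀ v ∈ V, u ≠ v → a ≤ dist (f u) (f v) / dist u v ∧
      dist (f u) (f v) / dist u v ≤ b := by
    intro x
    have hx := hD x
    -- a = Df * 2/(1+q), b = a * q
    have ha : Df x * (2 / (1 + q)) < Df x := by
      have : 2 / (1 + q) < 1 := by rw [div_lt_one (by linarith)]; linarith
      nlinarith
    have hb : Df x < q * (Df x * (2 / (1 + q))) := by
      have : 1 < q * (2 / (1 + q)) := by
        rw [mul_div_assoc', one_lt_div (by linarith)]; linarith
      nlinarith
    have hev := (hconf x).eventually (Icc_mem_nhds ha hb)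
    rw [eventually_inf_principal] at hev
    obtain ⟨t, ht, h⟩ := mem_prod_self_iff.1 hev
    obtain ⟨V, hVt, hV, hxV⟩ := _root_.mem_nhds_iff.1 ht
    refine ⟨V, hV, hxV, Df x * (2 / (1 + q)), _, le_rfl, fun u hu v hv hne => ?_⟩
    exact h (mk_mem_prod (hVt hu) (hVt hv)) hne
  choose V hV hxV a b hab h using key
  obtain ⟨δ, hδ, hleb⟩ := lebesgue_number_lemma_of_metric (s := (Set.univ : Set Λ)) (c := V)
    isCompact_univ hV (fun x _ => mem_iUnion.2 ⟨x, hxV x⟩)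
  refine ⟨δ, hδ, fun u v huv => ?_⟩
  obtain ⟨i, hi⟩ := hleb u (mem_univ _)
  have hu : u ∈ V i := hi (mem_ball_self hδ)
  have hv : v ∈ V i := hi (by rwa [mem_ball, dist_comm])
  rcases eq_or_ne u v with rfl | hne
  · simp
  have h1 := (aux_bounds hpt hconf (hV i) (h i) hu).1
  have h2 := (h i u hu v hv hne).2
  have hd : 0 < dist u v := dist_pos.2 hne
  rw [div_le_iff₀ hd] at h2
  have h3 : b i ≤ q * Df u := (hab i).trans (by nlinarith)
  exact h2.trans (by nlinarith)

lemma aux_orb_add (f : Λ → Λ) (Df : Λ → ℝ) (k m : ℕ) (x : Λ) :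
    orbDeriv f Df (k + m) x = orbDeriv f Df k x * orbDeriv f Df m (f^[k] x) := by
  unfold orbDeriv
  rw [Finset.prod_range_add]
  congr 1
  refine Finset.prod_congr rfl fun i _ => ?_
  rw [← Function.iterate_add_apply, add_comm]

lemma aux_orb_pow_le {f : Λ → Λ} {Df : Λ → ℝ} {β : ℝ} (hβ : 0 ≤ β) (h : ∀ x, β ≤ Df x) (n : ℕ)
    (x : Λ) : β ^ n ≤ orbDeriv f Df n x := by
  unfold orbDeriv
  simpa using Finset.prod_le_prod (s := Finset.range n) (f := fun _ => β) (fun _ _ => hβ)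
    (fun k _ => h (f^[k] x))

lemma aux_orb_le_pow {f : Λ → Λ} {Df : Λ → ℝ} {b : ℝ} (h0 : ∀ x, 0 ≤ Df x) (h : ∀ x, Df x ≤ b)
    (n : ℕ) (x : Λ) : orbDeriv f Df n x ≤ b ^ n := by
  unfold orbDeriv
  simpa using Finset.prod_le_prod (s := Finset.range n) (g := fun _ => b) (fun k _ => h0 _)
    (fun k _ => h (f^[k] x))

/-- perturbed weight -/
def auxW (f : Λ → Λ) (Df : Λ → ℝ) (q s : ℝ) (n : ℕ) (x : Λ) : ℝ≥0∞ :=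
  ENNReal.ofReal ((q ^ n * orbDeriv f Df n x) ^ (-s))

/-- localized transfer operator -/
def auxS (f : Λ → Λ) (Df : Λ → ℝ) (q s : ℝ) (A : Set Λ) (n : ℕ) (y : Λ) : ℝ≥0∞ :=
  ∑' x : ↥(A ∩ f^[n] ⁻¹' {y}), auxW f Df q s n x

/-- supremum -/
def auxM (f : Λ → Λ) (Df : Λ → ℝ) (q s : ℝ) (n : ℕ) : ℝ≥0∞ :=
  ⨆ y, auxS f Df q s univ n y

lemma auxW_add {f : Λ → Λ} {Df : Λ → ℝ} {q s : ℝ} (hq : 0 < q) (hD : ∀ x, 1 ≤ Df x)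
    (k m : ℕ) (x : Λ) :
    auxW f Df q s (k + m) x = auxW f Df q s k x * auxW f Df q s m (f^[k] x) := by
  unfold auxW
  have h : ∀ n x, 0 ≤ q ^ n * orbDeriv f Df n x := fun n x => by
    have := aux_orb_pow_le (f := f) zero_le_one hD n x
    rw [one_pow] at this
    positivity
  rw [← ENNReal.ofReal_mul (Real.rpow_nonneg (h _ _) _), ← Real.mul_rpow (h _ _) (h _ _),
    aux_orb_add, pow_add]
  congr 2
  ring

lemma auxS_local {f : Λ → Λ} {Df : Λ → ℝ} {q s : ℝ} (hq : 0 < q) (hD : ∀ x, 1 ≤ Df x)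
    {U : Set Λ} {k : ℕ} (hinj : InjOn f^[k] U) {B : ℝ≥0∞} (hB : ∀ u ∈ U, auxW f Df q s k u ≤ B)
    (m : ℕ) (y : Λ) : auxS f Df q s U (k + m) y ≤ B * auxM f Df q s m := by
  unfold auxS
  have hmap : ∀ x : ↥(U ∩ f^[k + m] ⁻¹' {y}), f^[k] x ∈ univ ∩ f^[m] ⁻¹' {y} := by
    rintro ⟨x, hx, hxy⟩
    refine ⟨mem_univ _, ?_⟩
    simp only [mem_preimage, mem_singleton_iff] at hxy ⊢
    rw [← Function.iterate_add_apply, add_comm, hxy]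
  let φ : ↥(U ∩ f^[k + m] ⁻¹' {y}) → ↥(univ ∩ f^[m] ⁻¹' {y}) := fun x => ⟨f^[k] x, hmap x⟩
  have hφ : Function.Injective φ := by
    intro a b hab
    exact Subtype.ext (hinj a.2.1 b.2.1 (congrArg Subtype.val hab))
  calc ∑' x : ↥(U ∩ f^[k + m] ⁻¹' {y}), auxW f Df q s (k + m) x
      ≤ ∑' x : ↥(U ∩ f^[k + m] ⁻¹' {y}), B * auxW f Df q s m (φ x : Λ) := by
        refine ENNReal.tsum_le_tsum fun x => ?_
        rw [auxW_add hq hD]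
        exact mul_le_mul_left (hB _ x.2.1) _
    _ = B * ∑' x : ↥(U ∩ f^[k + m] ⁻¹' {y}), auxW f Df q s m (φ x : Λ) := ENNReal.tsum_mul_left
    _ ≤ B * auxS f Df q s univ m y :=
        mul_le_mul_right (ENNReal.tsum_comp_le_tsum_of_injective hφ
          (fun z : ↥(univ ∩ f^[m] ⁻¹' {y}) => auxW f Df q s m z)) _
    _ ≤ _ := mul_le_mul_right (le_iSup (fun y => auxS f Df q s univ m y) y) _

lemma auxS_cover {f : Λ → Λ} {Df : Λ → ℝ} {q s : ℝ} {ι : Type*} (t : Finset ι) (U : ι → Set Λ)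
    (hU : univ ⊆ ⋃ i ∈ t, U i) (n : ℕ) (y : Λ) :
    auxS f Df q s univ n y ≤ ∑ i ∈ t, auxS f Df q s (U i) n y := by
  unfold auxS
  refine le_trans ?_ (ENNReal.tsum_biUnion_le (auxW f Df q s n) t
    (fun i => U i ∩ f^[n] ⁻¹' {y}))
  refine ENNReal.tsum_mono_subtype (auxW f Df q s n) ?_
  rintro x ⟨-, hx⟩
  obtain ⟨i, hi, hxi⟩ := mem_iUnion₂.1 (hU (mem_univ x))
  exact mem_iUnion₂.2 ⟨i, hi, hxi, hx⟩

lemma auxW_le_one {f : Λ → Λ} {Df : Λ → ℝ} {q s : ℝ} (hq : 1 ≤ q) (hs : 0 ≤ s)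
    (hD : ∀ x, 1 ≤ Df x) (n : ℕ) (x : Λ) : auxW f Df q s n x ≤ 1 := by
  unfold auxW
  rw [ENNReal.ofReal_le_one]
  refine Real.rpow_le_one_of_one_le_of_nonpos ?_ (by linarith)
  have := aux_orb_pow_le (f := f) zero_le_one hD n x
  rw [one_pow] at this
  exact one_le_mul_of_one_le_of_one_le (one_le_pow₀ hq) this

lemma auxM_ne_top [CompactSpace Λ] {f : Λ → Λ} {Df : Λ → ℝ} {q s : ℝ} (hq : 1 ≤ q) (hs : 0 ≤ s)
    (hD : ∀ x, 1 ≤ Df x) {δ : ℝ} (hδ : 0 < δ)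
    (hinj : ∀ u v, dist u v < δ → f u = f v → u = v) (n : ℕ) : auxM f Df q s n ≠ ⊤ := by
  induction n with
  | zero =>
    refine ne_top_of_le_ne_top ENNReal.one_ne_top (iSup_le fun y => ?_)
    unfold auxS
    have h : (univ ∩ f^[0] ⁻¹' {y}) = {y} := by ext; simp
    rw [h, tsum_singleton y (auxW f Df q s 0)]
    exact auxW_le_one hq hs hD _ _
  | succ n ih =>
    obtain ⟨t, ht⟩ := isCompact_univ.elim_finite_subcover (fun x : Λ => ball x (δ / 2))
      (fun x => isOpen_ball) (fun x _ => mem_iUnion.2 ⟨x, mem_ball_self (half_pos hδ)⟩)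
    have : auxM f Df q s (n + 1) ≤ ∑ i ∈ t, 1 * auxM f Df q s n := by
      refine iSup_le fun y => (auxS_cover t _ ht _ y).trans (Finset.sum_le_sum fun i _ => ?_)
      rw [add_comm n 1]
      refine auxS_local (by linarith) hD ?_ (fun u _ => auxW_le_one hq hs hD _ _) n y
      intro u hu v hv huv
      refine hinj u v ?_ (by simpa using huv)
      rw [mem_ball] at hu hv
      have := dist_triangle_right u v i
      linarith
    refine ne_top_of_le_ne_top ?_ this
    refine ENNReal.sum_ne_top.2 fun i _ => ?_
    simpa using ih

lemma aux_orbit [CompactSpace Λ] {f : Λ → Λ} {Df : Λ → ℝ} {q s δ lam₀ : ℝ} (hq : 1 ≤ q)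
    (hs : 0 ≤ s)
    (hD : ∀ x, 1 ≤ Df x) (hδ : 0 < δ) (hlam : 1 < lam₀)
    (hexp : ∀ u v : Λ, dist u v < δ → lam₀ * dist u v ≤ dist (f u) (f v))
    (hup : ∀ u v : Λ, dist u v < δ → dist (f u) (f v) ≤ q * Df u * dist u v)
    {U : Set Λ} {u₀ v₀ : Λ} (hu₀ : u₀ ∈ U) (hv₀ : v₀ ∈ U) (hne : u₀ ≠ v₀) :
    ∃ k : ℕ, InjOn f^[k] U ∧ ∀ u ∈ U, auxW f Df q s k u ≤
      ENNReal.ofReal ((2 / δ) ^ s) * ENNReal.ofReal (diam U ^ s) := by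
  have hex : ∃ k : ℕ, ∃ u ∈ U, ∃ v ∈ U, δ ≤ dist (f^[k] u) (f^[k] v) := by
    by_contra! hcon
    have hgrow : ∀ k : ℕ, lam₀ ^ k * dist u₀ v₀ ≤ dist (f^[k] u₀) (f^[k] v₀) := by
      intro k
      induction k with
      | zero => simp
      | succ k ih =>
        rw [Function.iterate_succ_apply', Function.iterate_succ_apply']
        refine le_trans ?_ (hexp _ _ (hcon k _ hu₀ _ hv₀))
        rw [pow_succ']
        nlinarith
    obtain ⟨k, hk⟩ := pow_unbounded_of_one_lt (δ / dist u₀ v₀) hlam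
    rw [div_lt_iff₀ (dist_pos.2 hne)] at hk
    exact absurd (hcon k _ hu₀ _ hv₀) (not_lt.2 (hk.le.trans (hgrow k)))
  have hmin : ∀ j < Nat.find hex, ∀ u ∈ U, ∀ v ∈ U, dist (f^[j] u) (f^[j] v) < δ := by
    intro j hj u hu v hv
    have := Nat.find_min hex hj
    push Not at this
    exact this u hu v hv
  obtain ⟨v₁, hv₁, v₂, hv₂, hk⟩ := Nat.find_spec hex
  set k := Nat.find hex with hkdef
  refine ⟨k, ?_, ?_⟩
  · have : ∀ j ≤ k, InjOn f^[j] U := by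
      intro j
      induction j with
      | zero => intro _ a _ b _ h; simpa using h
      | succ j ih =>
        intro hj a ha b hb h
        rw [Function.iterate_succ_apply', Function.iterate_succ_apply'] at h
        have h1 := hexp _ _ (hmin j (by omega) a ha b hb)
        rw [h, dist_self] at h1
        have h2 : dist (f^[j] a) (f^[j] b) ≤ 0 := by
          have := dist_nonneg (x := f^[j] a) (y := f^[j] b)
          nlinarith
        exact ih (by omega) ha hb (dist_le_zero.1 h2)
    exact this k le_rfl
  · intro u hu
    have hdist : ∀ j ≤ k, ∀ v ∈ U,
        dist (f^[j] u) (f^[j] v) ≤ q ^ j * orbDeriv f Df j u * dist u v := by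
      intro j
      induction j with
      | zero => intro _ v _; simp [orbDeriv]
      | succ j ih =>
        intro hj v hv
        rw [Function.iterate_succ_apply', Function.iterate_succ_apply']
        refine (hup _ _ (hmin j (by omega) u hu v hv)).trans ?_
        have h1 := ih (by omega) v hv
        have h2 : 0 ≤ q * Df (f^[j] u) := by
          have := hD (f^[j] u)
          positivity
        refine (mul_le_mul_of_nonneg_left h1 h2).trans (le_of_eq ?_)
        rw [aux_orb_add f Df j 1]
        simp [orbDeriv]
        ring
    have hbdd : ∀ v ∈ U, dist u v ≤ diam U := fun v hv =>
      dist_le_diam_of_mem (isCompact_univ.isBounded.subset (subset_univ _)) hu hv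
    have horb : 1 ≤ orbDeriv f Df k u := by
      simpa using aux_orb_pow_le (f := f) zero_le_one hD k u
    set Q := q ^ k * orbDeriv f Df k u with hQ
    have hQpos : 0 < Q := by positivity
    have hQd : δ ≤ 2 * Q * diam U := by
      have h1 := (hdist k le_rfl v₁ hv₁).trans (mul_le_mul_of_nonneg_left (hbdd v₁ hv₁) hQpos.le)
      have h2 := (hdist k le_rfl v₂ hv₂).trans (mul_le_mul_of_nonneg_left (hbdd v₂ hv₂) hQpos.le)
      have := dist_triangle_left (f^[k] v₁) (f^[k] v₂) (f^[k] u)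
      linarith
    unfold auxW
    rw [← hQ, ← ENNReal.ofReal_mul (by positivity), ← Real.mul_rpow (by positivity) diam_nonneg,
      Real.rpow_neg hQpos.le, ← Real.inv_rpow hQpos.le]
    refine ENNReal.ofReal_le_ofReal (Real.rpow_le_rpow (by positivity) ?_ hs)
    rw [inv_le_iff_one_le_mul₀ hQpos, div_mul_eq_mul_div, div_mul_eq_mul_div, one_le_div hδ]
    linarith

lemma aux_cover_bound [CompactSpace Λ] [Nonempty Λ] (hpt : ∀ x : Λ, (𝓝[≠] x).NeBot)
    {f : Λ → Λ} {Df : Λ → ℝ} {q s δ lam₀ : ℝ} (hq : 1 ≤ q)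
    (hs : 0 ≤ s)
    (hD : ∀ x, 1 ≤ Df x) (hδ : 0 < δ) (hlam : 1 < lam₀)
    (hexp : ∀ u v : Λ, dist u v < δ → lam₀ * dist u v ≤ dist (f u) (f v))
    (hup : ∀ u v : Λ, dist u v < δ → dist (f u) (f v) ≤ q * Df u * dist u v)
    (hM : ∀ C : ℝ≥0∞, C ≠ ⊤ → ∃ n, C < auxM f Df q s n)
    (U : ℕ → Set Λ) (hU : ∀ i, IsOpen (U i)) (hcov : (univ : Set Λ) ⊆ ⋃ i, U i) :
    1 ≤ ENNReal.ofReal ((2 / δ) ^ s) * ∑' i, ENNReal.ofReal (diam (U i) ^ s) := by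
  have hfin : ∀ n, auxM f Df q s n ≠ ⊤ := by
    refine auxM_ne_top hq hs hD hδ ?_
    intro u v huv h
    have h1 := hexp u v huv
    rw [h, dist_self] at h1
    refine dist_le_zero.1 ?_
    have := dist_nonneg (x := u) (y := v)
    nlinarith
  have hk : ∀ i, ∃ k : ℕ, InjOn f^[k] (U i) ∧ ∀ u ∈ U i, auxW f Df q s k u ≤
      ENNReal.ofReal ((2 / δ) ^ s) * ENNReal.ofReal (diam (U i) ^ s) := by
    intro i
    rcases (U i).eq_empty_or_nonempty with he | ⟨x, hx⟩
    · exact ⟨0, by simp [he], by simp [he]⟩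
    · have := hpt x
      have h1 : ∀ᶠ y in 𝓝[≠] x, y ∈ U i ∧ y ≠ x :=
        (eventually_nhdsWithin_of_eventually_nhds ((hU i).mem_nhds hx)).and self_mem_nhdsWithin
      obtain ⟨y, hy, hyx⟩ := h1.exists
      exact aux_orbit hq hs hD hδ hlam hexp hup hy hx hyx
  choose k hinj hB using hk
  obtain ⟨t, ht⟩ := isCompact_univ.elim_finite_subcover U hU hcov
  set K := t.sup k with hK
  set C := ∑ j ∈ Finset.range (K + 1), auxM f Df q s j with hC
  have hCtop : C ≠ ⊤ := ENNReal.sum_ne_top.2 fun i _ => hfin i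
  have hex := hM C hCtop
  set n := Nat.find hex with hn
  have hnC : C < auxM f Df q s n := Nat.find_spec hex
  have hrec : ∀ j ≤ n, auxM f Df q s j ≤ auxM f Df q s n := by
    intro j hj
    rcases hj.eq_or_lt with rfl | hj
    · exact le_rfl
    · exact (not_lt.1 (Nat.find_min hex hj)).trans hnC.le
  have hKn : K < n := by
    by_contra! h
    have : auxM f Df q s n ≤ C :=
      Finset.single_le_sum (f := fun j => auxM f Df q s j) (fun _ _ => zero_le)
        (Finset.mem_range.2 (by omega))
    exact absurd hnC (not_lt.2 this)
  set A := ENNReal.ofReal ((2 / δ) ^ s)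
  have hmain : auxM f Df q s n ≤ (A * ∑' i, ENNReal.ofReal (diam (U i) ^ s)) *
      auxM f Df q s n := by
    refine iSup_le fun y => (auxS_cover t U ht n y).trans ?_
    calc ∑ i ∈ t, auxS f Df q s (U i) n y
        ≤ ∑ i ∈ t, (A * ENNReal.ofReal (diam (U i) ^ s)) * auxM f Df q s n := by
          refine Finset.sum_le_sum fun i hi => ?_
          have hki : k i ≤ K := Finset.le_sup hi
          obtain ⟨m, hm⟩ := Nat.exists_eq_add_of_le (hki.trans hKn.le)
          have h1 := auxS_local (by linarith) hD (hinj i) (hB i) m y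
          rw [← hm] at h1
          exact h1.trans (mul_le_mul_right (hrec m (by omega)) _)
      _ = (A * ∑ i ∈ t, ENNReal.ofReal (diam (U i) ^ s)) * auxM f Df q s n := by
          rw [← Finset.sum_mul, Finset.mul_sum]
      _ ≤ _ := mul_le_mul_left (mul_le_mul_right (ENNReal.sum_le_tsum t) _) _
  have h0 : auxM f Df q s n ≠ 0 := (zero_le.trans_lt hnC).ne'
  by_contra! hlt
  have := ENNReal.mul_lt_mul_left h0 (hfin n) hlt
  rw [one_mul] at this
  exact absurd hmain (not_le.2 this)


lemma aux_fib {f : Λ → Λ} (hfib : ∀ y : Λ, (f ⁻¹' {y}).Finite) (n : ℕ) (y : Λ) :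
    (f^[n] ⁻¹' {y}).Finite := by
  induction n with
  | zero => simp
  | succ n ih =>
    rw [Function.iterate_succ, Set.preimage_comp]
    exact ih.preimage' fun b _ => hfib b

lemma aux_mn_le {f : Λ → Λ} {Df : Λ → ℝ} (hD : ∀ x, 1 ≤ Df x) (s : ℝ) (n : ℕ) (y : Λ) :
    mn f Df s n ≤ ∑' x : ↥(f^[n] ⁻¹' {y}), orbDeriv f Df n (x : Λ) ^ (-s) := by
  refine ciInf_le ⟨0, ?_⟩ y
  rintro _ ⟨z, rfl⟩
  refine tsum_nonneg fun x => Real.rpow_nonneg ?_ _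
  have := aux_orb_pow_le (f := f) zero_le_one hD n x
  rw [one_pow] at this
  linarith

lemma aux_mn_pos [Nonempty Λ] {f : Λ → Λ} {Df : Λ → ℝ} (hD : ∀ x, 1 ≤ Df x)
    (hfib : ∀ y : Λ, (f ⁻¹' {y}).Finite) (hsurj : Function.Surjective f)
    {b : ℝ} (hb : ∀ x, Df x ≤ b) {s : ℝ} (hs : 0 ≤ s) (n : ℕ) : 0 < mn f Df s n := by
  have hb1 : 1 ≤ b := (hD (Classical.arbitrary Λ)).trans (hb _)
  have horb : ∀ x, 1 ≤ orbDeriv f Df n x := fun x => by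
    simpa using aux_orb_pow_le (f := f) zero_le_one hD n x
  have : (b ^ n) ^ (-s) ≤ mn f Df s n := by
    refine le_ciInf fun y => ?_
    have := (aux_fib hfib n y).to_subtype
    obtain ⟨x, hx⟩ := hsurj.iterate n y
    have h1 : orbDeriv f Df n x ^ (-s) ≤
        ∑' x : ↥(f^[n] ⁻¹' {y}), orbDeriv f Df n (x : Λ) ^ (-s) :=
      (Summable.of_finite (f := fun x : ↥(f^[n] ⁻¹' {y}) =>
        orbDeriv f Df n (x : Λ) ^ (-s))).le_tsum ⟨x, hx⟩
        (fun z _ => Real.rpow_nonneg (by linarith [horb z]) _)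
    refine le_trans ?_ h1
    exact Real.rpow_le_rpow_of_nonpos (by linarith [horb x])
      (aux_orb_le_pow (fun x => by linarith [hD x]) hb n x) (by linarith)
  exact lt_of_lt_of_le (Real.rpow_pos_of_pos (by positivity) _) this

lemma aux_mn_mono [Nonempty Λ] {f : Λ → Λ} {Df : Λ → ℝ} {β : ℝ} (hβ : 1 < β)
    (hD : ∀ x, β ≤ Df x) (hfib : ∀ y : Λ, (f ⁻¹' {y}).Finite) {s t : ℝ} (hst : s ≤ t) (n : ℕ) :
    (β ^ n) ^ (t - s) * mn f Df t n ≤ mn f Df s n := by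
  have hD1 : ∀ x, 1 ≤ Df x := fun x => hβ.le.trans (hD x)
  refine le_ciInf fun y => ?_
  have := (aux_fib hfib n y).to_subtype
  refine (mul_le_mul_of_nonneg_left (aux_mn_le hD1 t n y) (by positivity)).trans ?_
  rw [← tsum_mul_left]
  refine Summable.tsum_le_tsum (fun x => ?_) Summable.of_finite Summable.of_finite
  have h1 := aux_orb_pow_le (f := f) (by linarith : (0:ℝ) ≤ β) hD n x
  have h2 : 0 < orbDeriv f Df n x := lt_of_lt_of_le (by positivity) h1
  have h3 : -s = (t - s) + (-t) := by ring
  rw [h3, Real.rpow_add h2]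
  exact mul_le_mul_of_nonneg_right (Real.rpow_le_rpow (by positivity) h1 (by linarith))
    (by positivity)

lemma aux_P_pos [Nonempty Λ] {f : Λ → Λ} {Df : Λ → ℝ} {β : ℝ} (hβ : 1 < β)
    (hD : ∀ x, β ≤ Df x) (hfib : ∀ y : Λ, (f ⁻¹' {y}).Finite) (hsurj : Function.Surjective f)
    {b : ℝ} (hb : ∀ x, Df x ≤ b) {s t : ℝ} (hs : 0 ≤ s) (hst : s < t) {p : ℝ}
    (hps : Tendsto (fun n : ℕ => (n : ℝ)⁻¹ * Real.log (mn f Df s n)) atTop (𝓝 p))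
    (hpt : Tendsto (fun n : ℕ => (n : ℝ)⁻¹ * Real.log (mn f Df t n)) atTop (𝓝 0)) :
    0 < p := by
  have hD1 : ∀ x, 1 ≤ Df x := fun x => hβ.le.trans (hD x)
  have h1 : 0 < (t - s) * Real.log β := mul_pos (by linarith) (Real.log_pos hβ)
  refine lt_of_lt_of_le h1 ?_
  have h2 := hpt.const_add ((t - s) * Real.log β)
  rw [add_zero] at h2
  refine le_of_tendsto_of_tendsto h2 hps ?_
  filter_upwards [eventually_gt_atTop 0] with n hn
  have hn' : (0 : ℝ) < n := by exact_mod_cast hn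
  have hpos := aux_mn_pos hD1 hfib hsurj hb (by linarith : 0 ≤ t) n
  have h3 := Real.log_le_log (by positivity) (aux_mn_mono hβ hD hfib hst.le n)
  rw [Real.log_mul (by positivity) hpos.ne', Real.log_rpow (by positivity), Real.log_pow] at h3
  have h4 := mul_le_mul_of_nonneg_left h3 (inv_nonneg.2 hn'.le)
  refine le_trans (le_of_eq ?_) h4
  field_simp

lemma aux_M_unbdd [Nonempty Λ] {f : Λ → Λ} {Df : Λ → ℝ}
    (hD : ∀ x, 1 ≤ Df x) (hfib : ∀ y : Λ, (f ⁻¹' {y}).Finite) (hsurj : Function.Surjective f)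
    {b : ℝ} (hb : ∀ x, Df x ≤ b) {s : ℝ} (hs : 0 ≤ s) {p : ℝ}
    (hps : Tendsto (fun n : ℕ => (n : ℝ)⁻¹ * Real.log (mn f Df s n)) atTop (𝓝 p))
    {ε : ℝ} (hε : ε * s < p) (C : ℝ≥0∞) (hC : C ≠ ⊤) :
    ∃ n, C < auxM f Df (Real.exp ε) s n := by
  have hle : ∀ n, ENNReal.ofReal ((Real.exp ε ^ n) ^ (-s) * mn f Df s n) ≤
      auxM f Df (Real.exp ε) s n := by
    intro n
    let y : Λ := Classical.arbitrary Λ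
    refine le_trans ?_ (le_iSup _ y)
    have := (aux_fib hfib n y).to_subtype
    refine (ENNReal.ofReal_le_ofReal (mul_le_mul_of_nonneg_left (aux_mn_le hD s n y)
      (by positivity))).trans ?_
    have horb : ∀ x, 0 ≤ orbDeriv f Df n x := fun x => zero_le_one.trans (by
      simpa using aux_orb_pow_le (f := f) zero_le_one hD n x)
    rw [← tsum_mul_left, ENNReal.ofReal_tsum_of_nonneg
      (fun x => mul_nonneg (by positivity) (Real.rpow_nonneg (horb _) _)) Summable.of_finite]
    unfold auxS
    rw [univ_inter]
    refine ENNReal.tsum_le_tsum fun x => le_of_eq ?_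
    unfold auxW
    rw [Real.mul_rpow (by positivity) (horb _)]
  set r := (p - ε * s) / 2 with hr
  have hr0 : 0 < r := by rw [hr]; linarith
  have hev : ∀ᶠ n : ℕ in atTop, ε * s + r < (n : ℝ)⁻¹ * Real.log (mn f Df s n) :=
    hps.eventually (lt_mem_nhds (by rw [hr]; linarith))
  have hlim : Tendsto (fun n : ℕ => Real.exp (n * r)) atTop atTop :=
    Real.tendsto_exp_atTop.comp (tendsto_natCast_atTop_atTop.atTop_mul_const hr0)
  obtain ⟨n, h1, h2, h3⟩ := (hev.and ((hlim.eventually (eventually_gt_atTop C.toReal)).and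
    (eventually_gt_atTop 0))).exists
  refine ⟨n, lt_of_lt_of_le ?_ (hle n)⟩
  rw [ENNReal.lt_ofReal_iff_toReal_lt hC]
  refine h2.trans_le ?_
  have hn' : (0 : ℝ) < n := by exact_mod_cast h3
  have hpos := aux_mn_pos hD hfib hsurj hb hs n
  rw [inv_mul_eq_div, lt_div_iff₀ hn'] at h1
  rw [← Real.exp_nat_mul, ← Real.exp_mul]
  nth_rewrite 1 [← Real.exp_log hpos]
  rw [← Real.exp_add]
  refine Real.exp_le_exp.2 ?_
  nlinarith

lemma aux_hausdorff [CompactSpace Λ] [Nonempty Λ] [MeasurableSpace Λ] [BorelSpace Λ] {s : ℝ}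
    (hs : 0 < s) {c : ℝ≥0∞} (hc : 0 < c) (hctop : c ≠ ⊤)
    (h : ∀ U : ℕ → Set Λ, (∀ i, IsOpen (U i)) → (Set.univ : Set Λ) ⊆ ⋃ i, U i →
        c ≤ ∑' i, ENNReal.ofReal (Metric.diam (U i) ^ s)) :
    0 < μH[s] (Set.univ : Set Λ) := by
  obtain ⟨c', hc'0, hc'⟩ : ∃ c' : ℝ≥0∞, 0 < c' ∧ c' < c := exists_between hc
  obtain ⟨ε, hε0, hεs⟩ := ENNReal.exists_pos_sum_of_countable' (tsub_pos_of_lt hc').ne' ℕ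
  refine hc'0.trans_le ?_
  rw [Measure.hausdorffMeasure_apply]
  refine le_iSup₂_of_le 1 one_pos ?_
  refine le_iInf fun t => le_iInf fun ht => le_iInf fun hd => ?_
  have hbd : ∀ A : Set Λ, Bornology.IsBounded A := fun A =>
    isCompact_univ.isBounded.subset (subset_univ _)
  have hch : ∀ i, ∃ η : ℝ, 0 < η ∧ ENNReal.ofReal ((diam (t i) + 2 * η) ^ s) ≤
      ENNReal.ofReal (diam (t i) ^ s) + ε i := by
    intro i
    have hcont : Tendsto (fun η : ℝ => ENNReal.ofReal ((diam (t i) + 2 * η) ^ s)) (𝓝[>] 0)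
        (𝓝 (ENNReal.ofReal (diam (t i) ^ s))) := by
      have : Continuous fun η : ℝ => ENNReal.ofReal ((diam (t i) + 2 * η) ^ s) :=
        ENNReal.continuous_ofReal.comp
          ((by fun_prop : Continuous fun η : ℝ => diam (t i) + 2 * η).rpow_const
            (fun _ => Or.inr hs.le))
      have h0 := this.tendsto 0
      simp only [mul_zero, add_zero] at h0
      exact h0.mono_left nhdsWithin_le_nhds
    have hlt : ENNReal.ofReal (diam (t i) ^ s) < ENNReal.ofReal (diam (t i) ^ s) + ε i :=
      ENNReal.lt_add_right ENNReal.ofReal_ne_top (hε0 i).ne'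
    obtain ⟨η, h1, h2⟩ := ((hcont.eventually (gt_mem_nhds hlt)).and self_mem_nhdsWithin).exists
    exact ⟨η, h2, h1.le⟩
  choose η hη hηle using hch
  have hU := h (fun i => thickening (η i) (t i)) (fun i => isOpen_thickening)
    (ht.trans (iUnion_mono fun i => self_subset_thickening (hη i) _))
  have hterm : ∀ i, ENNReal.ofReal (diam (thickening (η i) (t i)) ^ s) ≤
      (⨆ _ : (t i).Nonempty, ediam (t i) ^ s) + ε i := by
    intro i
    rcases (t i).eq_empty_or_nonempty with he | hne
    · simp [he, Real.zero_rpow hs.ne']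
    · refine (ENNReal.ofReal_le_ofReal (Real.rpow_le_rpow diam_nonneg
        (diam_thickening_le (t i) (hη i).le) hs.le)).trans ((hηle i).trans ?_)
      refine add_le_add_left (le_iSup_of_le hne ?_) _
      rw [← ENNReal.ofReal_rpow_of_nonneg diam_nonneg hs.le, diam,
        ENNReal.ofReal_toReal (hbd _).ediam_ne_top]
  have h5 : c ≤ ∑' i, (⨆ _ : (t i).Nonempty, ediam (t i) ^ s) + (c - c') :=
    hU.trans ((ENNReal.tsum_le_tsum hterm).trans
      (by rw [ENNReal.tsum_add]; exact add_le_add_right hεs.le _))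
  by_contra! hlt
  have h6 := ENNReal.add_lt_add_right (ENNReal.sub_ne_top (b := c') hctop) hlt
  rw [add_tsub_cancel_of_le hc'.le] at h6
  exact absurd h5 (not_le.2 h6)

end aux

/-- **Lower bound for the Hausdorff dimension.** For `0 ≤ s < s_crit` every countable open
cover of `Λ` by sets of diameter `< δ_f` has `Σ (diam U_α)^s` bounded below by a positive
constant; hence `H^s(Λ) > 0` for `s < s_crit` and `dimH Λ ≥ s_crit`. -/
theorem hausdorff_lower_bound {Λ : Type*} [MetricSpace Λ] [CompactSpace Λ] [Nonempty Λ]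
    [MeasurableSpace Λ] [BorelSpace Λ]
    (hpt : ∀ x : Λ, (𝓝[≠] x).NeBot)
    (f : Λ → Λ) (Df : Λ → ℝ)
    (hcont : Continuous f) (hsurj : Function.Surjective f)
    (hconf : IsConfDeriv f Df)
    (hexp : UnifExpanding f Df)
    (hopen : IsOpenMap f)
    (hfib : ∀ y : Λ, (f ⁻¹' {y}).Finite)
    (hmix : ∀ δ : ℝ, 0 < δ → ∃ n₀ : ℕ, ∀ x : Λ, f^[n₀] '' ball x δ = Set.univ)
    (β lam₀ lam₁ δf : ℝ)
    (hβ : 1 < β) (hDfβ : ∀ x : Λ, β ≤ Df x)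
    (hlam₀ : 1 < lam₀) (hlam₀β : lam₀ < β) (hδf : 0 < δf)
    (hC2' : ∀ u v : Λ, u ≠ v → dist u v < δf →
      lam₀ ≤ dist (f u) (f v) / dist u v ∧ dist (f u) (f v) / dist u v ≤ lam₁)
    (hC3' : ∀ x : Λ, ball (f x) δf ⊆ f '' ball x δf)
    -- the common finite pressure function and its unique zero `s_crit`
    (P : ℝ → ℝ)
    (hP : ∀ s : ℝ, 0 ≤ s →
      Filter.Tendsto (fun n : ℕ => (n : ℝ)⁻¹ * Real.log (mn f Df s n))
        Filter.atTop (𝓝 (P s)) ∧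
      Filter.Tendsto (fun n : ℕ => (n : ℝ)⁻¹ * Real.log (Mn f Df s n))
        Filter.atTop (𝓝 (P s)))
    (scrit : ℝ) (hscrit₀ : 0 ≤ scrit) (hzero : P scrit = 0)
    (huniq : ∀ s : ℝ, 0 ≤ s → P s = 0 → s = scrit) :
    (∀ s : ℝ, 0 ≤ s → s < scrit → ∃ c : ℝ, 0 < c ∧
      ∀ U : ℕ → Set Λ, (∀ i, IsOpen (U i)) → (∀ i, Metric.diam (U i) < δf) →
        (Set.univ : Set Λ) ⊆ ⋃ i, U i →
        ENNReal.ofReal c ≤ ∑' i, ENNReal.ofReal (Metric.diam (U i) ^ s)) ∧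
    (∀ s : ℝ, 0 ≤ s → s < scrit → 0 < μH[s] (Set.univ : Set Λ)) ∧
    ENNReal.ofReal scrit ≤ dimH (Set.univ : Set Λ) := by
  have hD1 : ∀ x, 1 ≤ Df x := fun x => hβ.le.trans (hDfβ x)
  have hb : ∀ x, Df x ≤ lam₁ := by
    intro x
    refine (aux_bounds hpt hconf (V := ball x (δf / 2)) (a := lam₀) (b := lam₁) isOpen_ball ?_
      (mem_ball_self (half_pos hδf))).2
    intro u hu v hv hne
    refine hC2' u v hne ?_
    rw [mem_ball] at hu hv
    have := dist_triangle_right u v x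
    linarith
  have key : ∀ s : ℝ, 0 ≤ s → s < scrit → ∃ c : ℝ, 0 < c ∧
      ∀ U : ℕ → Set Λ, (∀ i, IsOpen (U i)) → (Set.univ : Set Λ) ⊆ ⋃ i, U i →
        ENNReal.ofReal c ≤ ∑' i, ENNReal.ofReal (Metric.diam (U i) ^ s) := by
    intro s hs hsc
    have hp : 0 < P s := by
      refine aux_P_pos hβ hDfβ hfib hsurj hb hs hsc (hP s hs).1 ?_
      rw [← hzero]
      exact (hP scrit hscrit₀).1
    set ε := P s / (s + 1) with hεdef
    have hε : 0 < ε := by positivity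
    have hεs : ε * s < P s := by
      rw [hεdef, div_mul_eq_mul_div, div_lt_iff₀ (by linarith)]
      nlinarith
    obtain ⟨δ₀, hδ₀, hup⟩ := aux_scale hpt hconf (fun x => by linarith [hD1 x])
      (Real.one_lt_exp_iff.2 hε)
    set δ := min δ₀ δf with hδdef
    have hδ : 0 < δ := lt_min hδ₀ hδf
    have hA : 0 < (2 / δ) ^ s := by positivity
    refine ⟨((2 / δ) ^ s)⁻¹, inv_pos.2 hA, fun U hU hcov => ?_⟩
    have hmain := aux_cover_bound hpt (Real.one_le_exp hε.le) hs hD1 hδ hlam₀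
      (fun u v huv => ?_) (fun u v huv => hup u v (huv.trans_le (min_le_left _ _)))
      (aux_M_unbdd hD1 hfib hsurj hb hs (hP s hs).1 hεs) U hU hcov
    · rw [ENNReal.ofReal_inv_of_pos hA, ENNReal.inv_le_iff_le_mul]
      · exact hmain
      · intro _; exact (ENNReal.ofReal_pos.2 hA).ne'
      · intro h; exact absurd h ENNReal.ofReal_ne_top
    · rcases eq_or_ne u v with rfl | hne
      · simp
      · have h1 := (hC2' u v hne (huv.trans_le (min_le_right _ _))).1
        rwa [le_div_iff₀ (dist_pos.2 hne)] at h1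
  have hpos : ∀ s : ℝ, 0 ≤ s → s < scrit → 0 < μH[s] (Set.univ : Set Λ) := by
    intro s hs hsc
    rcases hs.eq_or_lt with rfl | hs0
    · have h1 := Measure.hausdorffMeasure_zero_singleton (Classical.arbitrary Λ)
      refine lt_of_lt_of_le ?_ (measure_mono (subset_univ {Classical.arbitrary Λ}))
      rw [h1]
      exact one_pos
    · obtain ⟨c, hc, h⟩ := key s hs hsc
      exact aux_hausdorff hs0 (ENNReal.ofReal_pos.2 hc) ENNReal.ofReal_ne_top h
  refine ⟨?_, hpos, ?_⟩
  · intro s hs hsc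
    obtain ⟨c, hc, h⟩ := key s hs hsc
    exact ⟨c, hc, fun U hU _ hcov => h U hU hcov⟩
  · refine le_of_forall_lt fun a ha => ?_
    obtain ⟨d, had, hd⟩ := ENNReal.lt_iff_exists_nnreal_btwn.1 ha
    refine had.trans_le (le_dimH_of_hausdorffMeasure_ne_zero (hpos d d.2 ?_).ne')
    rwa [ENNReal.lt_ofReal_iff_toReal_lt ENNReal.coe_ne_top] at hd

end
end
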